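/- The number of partitions of n into perfect squares satisfies p₄(n) ~ (ζ(3/2)^{2/3} / (2^{7/3} √3 π^{7/6} n^{7/6})) · exp( (3/2^{4/3}) π^{1/3} ζ(3/2)^{2/3} n^{1/3} ) as n → ∞. -/

import Mathlib

open Filter Topology

/-- `ζ(3/2)` as a real series. -/
noncomputable def zetaThreeHalves : ℝ := ∑' m : ℕ, ((m + 1 : ℝ)) ^ (-(3 / 2 : ℝ))

/-- The number of partitions of `n` into perfect squares. -/
noncomputable def pSq (n : ℕ) : ℕ :=
  Nat.card {q : Nat.Partition n // ∀ i ∈ q.parts, ∃ m : ℕ, 1 ≤ m ∧ i = m ^ 2}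

namespace SqPart

/-- theta-type series -/
noncomputable def Psi (z : ℂ) : ℂ := ∑' m : ℕ, Complex.exp (-((m + 1 : ℂ) ^ 2 * z))

/-- logarithm of the generating function -/
noncomputable def GG (z : ℂ) : ℂ := ∑' k : ℕ, Psi ((k + 1 : ℂ) * z) / (k + 1 : ℂ)

/-- double series term -/
noncomputable def dterm (z : ℂ) (p : ℕ × ℕ) : ℂ :=
  Complex.exp (-((p.2 + 1 : ℂ) ^ 2 * ((p.1 + 1 : ℂ) * z))) / (p.1 + 1 : ℂ)

lemma norm_dterm (z : ℂ) (p : ℕ × ℕ) :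
    ‖dterm z p‖ = Real.exp (-((p.2 + 1 : ℝ) ^ 2 * ((p.1 + 1 : ℝ) * z.re))) / (p.1 + 1 : ℝ) := by
  unfold dterm
  rw [norm_div, Complex.norm_exp]
  congr 1
  · congr 1
    have : (-((p.2 + 1 : ℂ) ^ 2 * ((p.1 + 1 : ℂ) * z))) =
      (((-((p.2 + 1 : ℝ) ^ 2 * (p.1 + 1 : ℝ)) : ℝ)) : ℂ) * z := by push_cast; ring
    rw [this, Complex.re_ofReal_mul]; ring
  · have : (p.1 + 1 : ℂ) = ((p.1 + 1 : ℝ) : ℂ) := by push_cast; ring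
    rw [this, Complex.norm_real, Real.norm_of_nonneg (by positivity)]

lemma summable_dterm {z : ℂ} (hz : 0 < z.re) : Summable (fun p => ‖dterm z p‖) := by
  have h1 : Summable (fun k : ℕ => Real.exp (-z.re) ^ k) :=
    summable_geometric_of_lt_one (Real.exp_pos _).le (by simpa using hz)
  have h2 := h1.mul_of_nonneg h1 (fun k => by positivity) (fun k => by positivity)
  refine h2.of_nonneg_of_le (fun p => norm_nonneg _) (fun p => ?_)
  rw [norm_dterm]
  have h3 : Real.exp (-((p.2 + 1 : ℝ) ^ 2 * ((p.1 + 1 : ℝ) * z.re))) / (p.1 + 1 : ℝ) ≤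
      Real.exp (-((p.2 + 1 : ℝ) ^ 2 * ((p.1 + 1 : ℝ) * z.re))) := by
    apply div_le_self (Real.exp_pos _).le
    have : (0 : ℝ) ≤ p.1 := by positivity
    linarith
  refine h3.trans ?_
  rw [← Real.exp_nat_mul, ← Real.exp_nat_mul, ← Real.exp_add]
  apply Real.exp_le_exp.mpr
  have ha : (0 : ℝ) ≤ p.1 := by positivity
  have hb : (0 : ℝ) ≤ p.2 := by positivity
  have : (p.1 + p.2 : ℝ) ≤ (p.2 + 1 : ℝ) ^ 2 * (p.1 + 1 : ℝ) := by
    have : 0 ≤ (p.1 : ℝ) * p.2 ^ 2 := by positivity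
    have : 0 ≤ (p.1 : ℝ) * p.2 := by positivity
    nlinarith
  nlinarith

lemma GG_eq_tsum {z : ℂ} (hz : 0 < z.re) : HasSum (dterm z) (GG z) := by
  have h := (summable_dterm hz).of_norm
  have h2 := h.hasSum
  rw [h.tsum_prod] at h2
  convert! h2 using 1
  unfold GG Psi dterm
  congr 1; ext k
  simp only
  rw [tsum_div_const]

lemma GG_hasSum_swap {z : ℂ} (hz : 0 < z.re) :
    HasSum (fun m : ℕ => -Complex.log (1 - Complex.exp (-((m + 1 : ℂ) ^ 2 * z)))) (GG z) := by
  have h := GG_eq_tsum hz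
  have h' := ((Equiv.prodComm ℕ ℕ).hasSum_iff).mpr h
  refine h'.prod_fiberwise (fun m => ?_)
  have hlt : ‖Complex.exp (-((m + 1 : ℂ) ^ 2 * z))‖ < 1 := by
    rw [Complex.norm_exp]
    have : (-((m + 1 : ℂ) ^ 2 * z)) = (((-(m + 1 : ℝ) ^ 2 : ℝ)) : ℂ) * z := by push_cast; ring
    rw [this, Complex.re_ofReal_mul]
    rw [Real.exp_lt_one_iff]
    have : 0 < (m + 1 : ℝ) ^ 2 * z.re := by positivity
    linarith
  have h3 := Complex.hasSum_taylorSeries_neg_log hlt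
  have h4 := (hasSum_nat_add_iff' 1).mpr h3
  simp only [Finset.range_one, Finset.sum_singleton, Nat.cast_zero, div_zero, sub_zero] at h4
  convert! h4 using 1
  ext k
  simp only [Function.comp, Equiv.prodComm_apply, Prod.swap, dterm]
  push_cast
  rw [← Complex.exp_nat_mul]
  congr 2
  push_cast; ring

lemma tendsto_prod {z : ℂ} (hz : 0 < z.re) :
    Tendsto (fun M : ℕ => ∏ m ∈ Finset.range M, (1 - Complex.exp (-((m + 1 : ℂ) ^ 2 * z)))⁻¹)
      atTop (𝓝 (Complex.exp (GG z))) := by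
  have h := (Complex.continuous_exp.tendsto _).comp (GG_hasSum_swap hz).tendsto_sum_nat
  refine h.congr (fun M => ?_)
  simp only [Function.comp]
  rw [Complex.exp_sum]
  refine Finset.prod_congr rfl (fun m _ => ?_)
  rw [Complex.exp_neg, Complex.exp_log]
  intro h0
  have h1 : Complex.exp (-((m + 1 : ℂ) ^ 2 * z)) = 1 := (sub_eq_zero.mp h0).symm
  have h2 : ‖Complex.exp (-((m + 1 : ℂ) ^ 2 * z))‖ = 1 := by rw [h1]; simp
  rw [Complex.norm_exp] at h2
  have : (-((m + 1 : ℂ) ^ 2 * z)) = (((-(m + 1 : ℝ) ^ 2 : ℝ)) : ℂ) * z := by push_cast; ring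
  rw [this, Complex.re_ofReal_mul] at h2
  have h3 := (Real.exp_eq_one_iff _).mp h2
  have : 0 < (m + 1 : ℝ) ^ 2 * z.re := by positivity
  linarith

/-- Evaluation of a power series at a point with absolute convergence. -/
def Ev (q : ℂ) (f : PowerSeries ℂ) (v : ℂ) : Prop :=
  Summable (fun n => ‖PowerSeries.coeff n f * q ^ n‖) ∧
    ∑' n, PowerSeries.coeff n f * q ^ n = v

lemma Ev.mul {q : ℂ} {f g : PowerSeries ℂ} {v w : ℂ} (hf : Ev q f v) (hg : Ev q g w) :
    Ev q (f * g) (v * w) := by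
  have key : ∀ n, PowerSeries.coeff n (f * g) * q ^ n =
      ∑ kl ∈ Finset.HasAntidiagonal.antidiagonal n, (PowerSeries.coeff kl.1 f * q ^ kl.1) *
        (PowerSeries.coeff kl.2 g * q ^ kl.2) := by
    intro n
    rw [PowerSeries.coeff_mul, Finset.sum_mul]
    refine Finset.sum_congr rfl (fun kl h => ?_)
    rw [← Finset.HasAntidiagonal.mem_antidiagonal.mp h, pow_add]; ring
  constructor
  · simp_rw [key]
    exact summable_norm_sum_mul_antidiagonal_of_summable_norm
      (f := fun n => PowerSeries.coeff n f * q ^ n)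
      (g := fun n => PowerSeries.coeff n g * q ^ n) hf.1 hg.1
  · simp_rw [key]
    have h := tsum_mul_tsum_eq_tsum_sum_antidiagonal_of_summable_norm
      (f := fun n => PowerSeries.coeff n f * q ^ n)
      (g := fun n => PowerSeries.coeff n g * q ^ n) hf.1 hg.1
    rw [hf.2, hg.2] at h
    exact h.symm

lemma Ev.one (q : ℂ) : Ev q 1 1 := by
  have : ∀ n, n ≠ 0 → PowerSeries.coeff n (1 : PowerSeries ℂ) * q ^ n = 0 := by
    intro n hn; simp [PowerSeries.coeff_one, hn]
  constructor
  · apply summable_of_ne_finset_zero (s := {0})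
    intro n hn
    rw [this n (by simpa using hn), norm_zero]
  · rw [tsum_eq_single 0 this]; simp

open scoped PowerSeries.WithPiTopology in
lemma Ev.geom {q : ℂ} (hq : ‖q‖ < 1) {d : ℕ} (hd : 0 < d) :
    Ev q (∑' j : ℕ, (PowerSeries.X : PowerSeries ℂ) ^ (d * j)) (1 - q ^ d)⁻¹ := by
  have hs : Summable (fun j : ℕ => (PowerSeries.X : PowerSeries ℂ) ^ (d * j)) := by
    simp_rw [pow_mul]
    exact PowerSeries.WithPiTopology.summable_pow_of_constantCoeff_eq_zero (by simp [hd.ne'])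
  have hc : ∀ n, PowerSeries.coeff n (∑' j : ℕ, (PowerSeries.X : PowerSeries ℂ) ^ (d * j)) =
      if d ∣ n then 1 else 0 := by
    intro n
    rw [hs.map_tsum _ (PowerSeries.WithPiTopology.continuous_coeff ℂ n)]
    simp_rw [PowerSeries.coeff_X_pow]
    split_ifs with h
    · obtain ⟨c, rfl⟩ := h
      rw [tsum_eq_single c]
      · simp
      · intro j hj
        rw [if_neg]
        intro h
        exact hj (Nat.eq_of_mul_eq_mul_left hd h).symm
    · convert! tsum_zero with j
      rw [if_neg]
      rintro rfl
      exact h ⟨j, rfl⟩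
  have hqd : ‖q ^ d‖ < 1 := by rw [norm_pow]; exact pow_lt_one₀ (norm_nonneg _) hq hd.ne'
  have hinj : Function.Injective (fun j : ℕ => d * j) := fun a b h => Nat.eq_of_mul_eq_mul_left hd h
  simp only [Ev, hc]
  constructor
  · refine (summable_geometric_of_lt_one (norm_nonneg q) hq).of_nonneg_of_le
      (fun _ => norm_nonneg _) (fun n => ?_)
    split_ifs <;> simp
  · refine HasSum.tsum_eq ?_
    rw [← hinj.hasSum_iff]
    · convert! hasSum_geometric_of_norm_lt_one hqd using 1
      ext j; simp [Function.comp, pow_mul]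
    · intro n hn
      rw [if_neg, zero_mul]
      rintro ⟨c, rfl⟩
      exact hn ⟨c, rfl⟩

/-- truncated predicate -/
def pM (M i : ℕ) : Prop := ∃ m < M, i = (m + 1) ^ 2

open Classical in
/-- truncated count -/
noncomputable def aM (M n : ℕ) : ℕ := (Nat.Partition.restricted n (pM M)).card

open Classical in
open scoped PowerSeries.WithPiTopology in
lemma mk_aM (M : ℕ) : (PowerSeries.mk fun n => (aM M n : ℂ)) =
    ∏ m ∈ Finset.range M, ∑' j : ℕ, (PowerSeries.X : PowerSeries ℂ) ^ ((m + 1) ^ 2 * j) := by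
  have h := Nat.Partition.hasProd_powerSeriesMk_card_restricted ℂ (pM M)
  have hinj : Function.Injective (fun m : ℕ => (m + 1) ^ 2 - 1) := by
    intro a b h
    simp only at h
    have h1 : 1 ≤ (a + 1) ^ 2 := Nat.one_le_pow _ _ (by omega)
    have h2 : 1 ≤ (b + 1) ^ 2 := Nat.one_le_pow _ _ (by omega)
    have h3 : (a + 1) ^ 2 = (b + 1) ^ 2 := by omega
    have := Nat.pow_left_injective (n := 2) (by norm_num) h3
    simpa using this
  rw [← hinj.hasProd_iff] at h
  · refine h.unique ?_
    have h5 : ∀ m : ℕ, (m + 1) ^ 2 - 1 + 1 = (m + 1) ^ 2 := fun m =>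
      Nat.sub_add_cancel (Nat.one_le_pow _ _ (by omega))
    have h6 : ∀ m, pM M ((m + 1) ^ 2) ↔ m < M := by
      intro m
      constructor
      · rintro ⟨m', h, h'⟩
        have := Nat.pow_left_injective (n := 2) (by norm_num) h'
        simp only [Nat.add_right_cancel_iff] at this
        omega
      · intro h; exact ⟨m, h, rfl⟩
    have h7 : ((fun i : ℕ => if pM M (i + 1) then
        ∑' j : ℕ, (PowerSeries.X : PowerSeries ℂ) ^ ((i + 1) * j) else 1) ∘
        fun m : ℕ => (m + 1) ^ 2 - 1) = fun m => if m < M then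
          ∑' j : ℕ, (PowerSeries.X : PowerSeries ℂ) ^ ((m + 1) ^ 2 * j) else 1 := by
      ext1 m
      simp only [Function.comp, h5, h6]
    rw [h7]
    have h8 := hasProd_prod_of_ne_finset_one (L := SummationFilter.unconditional ℕ) (s := Finset.range M) (f := fun m => if m < M then
          ∑' j : ℕ, (PowerSeries.X : PowerSeries ℂ) ^ ((m + 1) ^ 2 * j) else 1)
          (by
      intro m hm; simp only [Finset.mem_range] at hm; simp [hm])
    convert! h8 using 1
    refine Finset.prod_congr rfl (fun m hm => ?_)
    rw [if_pos (Finset.mem_range.mp hm)]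
  · intro i hi
    rw [if_neg]
    rintro ⟨m, _, h⟩
    exact hi ⟨m, by simp only; omega⟩

lemma Ev_aM {q : ℂ} (hq : ‖q‖ < 1) (M : ℕ) :
    Ev q (PowerSeries.mk fun n => (aM M n : ℂ))
      (∏ m ∈ Finset.range M, (1 - q ^ ((m + 1) ^ 2))⁻¹) := by
  rw [mk_aM]
  induction M with
  | zero => simpa using Ev.one q
  | succ M ih =>
    rw [Finset.prod_range_succ, Finset.prod_range_succ]
    exact ih.mul (Ev.geom hq (by positivity))

open Classical in
lemma pSq_eq (n : ℕ) : pSq n =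
    (Nat.Partition.restricted n (fun i => ∃ m : ℕ, 1 ≤ m ∧ i = m ^ 2)).card := by
  unfold pSq Nat.Partition.restricted
  rw [Nat.card_eq_fintype_card, Fintype.card_subtype]

open Classical in
lemma aM_le (M n : ℕ) : aM M n ≤ pSq n := by
  rw [pSq_eq, aM]
  apply Finset.card_le_card
  intro x hx
  simp only [Nat.Partition.restricted, Finset.mem_filter, Finset.mem_univ, true_and] at hx ⊢
  intro i hi
  obtain ⟨m, _, h⟩ := hx i hi
  exact ⟨m + 1, by omega, h⟩

open Classical in
lemma aM_eq {M n : ℕ} (h : n ≤ M) : aM M n = pSq n := by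
  apply le_antisymm (aM_le M n)
  rw [pSq_eq, aM]
  apply Finset.card_le_card
  intro x hx
  simp only [Nat.Partition.restricted, Finset.mem_filter, Finset.mem_univ, true_and] at hx ⊢
  intro i hi
  obtain ⟨m, hm, h'⟩ := hx i hi
  refine ⟨m - 1, ?_, ?_⟩
  · have h1 : i ≤ n := by
      rw [← x.parts_sum]
      exact Multiset.single_le_sum (fun _ _ => Nat.zero_le _) _ hi
    have : m ≤ m ^ 2 := Nat.le_self_pow (by norm_num) m
    omega
  · rw [Nat.sub_add_cancel hm]; exact h'

lemma exp_pow_eq (z : ℂ) (n : ℕ) : Complex.exp (-z) ^ n = Complex.exp (-(n * z)) := by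
  rw [← Complex.exp_nat_mul]; congr 1; ring

lemma hasSum_aM {z : ℂ} (hz : 0 < z.re) (M : ℕ) :
    HasSum (fun n : ℕ => (aM M n : ℂ) * Complex.exp (-z) ^ n)
      (∏ m ∈ Finset.range M, (1 - Complex.exp (-((m + 1 : ℂ) ^ 2 * z)))⁻¹) := by
  have hq : ‖Complex.exp (-z)‖ < 1 := by
    rw [Complex.norm_exp]; rw [Real.exp_lt_one_iff]; simpa using hz
  obtain ⟨h1, h2⟩ := Ev_aM hq M
  have h3 := h1.of_norm.hasSum
  rw [h2] at h3
  simp only [PowerSeries.coeff_mk, exp_pow_eq] at h3 ⊢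
  convert! h3 using 6
  push_cast; ring

lemma summable_pSq {t : ℝ} (ht : 0 < t) : Summable (fun n : ℕ => (pSq n : ℝ) * Real.exp (-t) ^ n) := by
  have hz : 0 < (t : ℂ).re := by simpa using ht
  have hb := (tendsto_prod hz).norm.bddAbove_range
  obtain ⟨B, hB⟩ := hb
  refine summable_of_sum_range_le (c := B) (fun n => by positivity) (fun N => ?_)
  have h := hasSum_aM hz N
  have h2 : HasSum (fun n : ℕ => (aM N n : ℝ) * Real.exp (-t) ^ n)
      (∏ m ∈ Finset.range N, (1 - Complex.exp (-((m + 1 : ℂ) ^ 2 * t)))⁻¹).re := by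
    convert! Complex.hasSum_re h using 1
    ext n
    rw [← Complex.ofReal_natCast, ← Complex.ofReal_neg, ← Complex.ofReal_exp, ← Complex.ofReal_pow,
      ← Complex.ofReal_mul, Complex.ofReal_re]
  calc ∑ n ∈ Finset.range N, (pSq n : ℝ) * Real.exp (-t) ^ n
      = ∑ n ∈ Finset.range N, (aM N n : ℝ) * Real.exp (-t) ^ n := by
        refine Finset.sum_congr rfl (fun n hn => ?_)
        rw [aM_eq (Finset.mem_range.mp hn).le]
    _ ≤ _ := sum_le_hasSum _ (fun n _ => by positivity) h2
    _ ≤ _ := Complex.re_le_norm _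
    _ ≤ B := hB ⟨N, rfl⟩

lemma hasSum_pSq {z : ℂ} (hz : 0 < z.re) :
    HasSum (fun n : ℕ => (pSq n : ℂ) * Complex.exp (-z) ^ n) (Complex.exp (GG z)) := by
  have hs := summable_pSq hz
  have hn : ∀ n, ‖Complex.exp (-z) ^ n‖ = Real.exp (-z.re) ^ n := by
    intro n; rw [norm_pow, Complex.norm_exp]; simp
  have hs' : Summable (fun n : ℕ => (pSq n : ℂ) * Complex.exp (-z) ^ n) := by
    apply Summable.of_norm
    refine hs.congr (fun n => ?_)
    rw [norm_mul, hn]; simp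
  have h := tendsto_tsum_of_dominated_convergence (𝓕 := atTop)
    (f := fun (M n : ℕ) => (aM M n : ℂ) * Complex.exp (-z) ^ n)
    (g := fun n : ℕ => (pSq n : ℂ) * Complex.exp (-z) ^ n) hs
    (fun n => by
      apply tendsto_const_nhds.congr'
      filter_upwards [eventually_ge_atTop n] with M hM
      rw [aM_eq hM])
    (Eventually.of_forall fun M n => by
      rw [norm_mul, hn]
      simp only [Complex.norm_natCast]
      gcongr
      exact aM_le M n)
  have h2 : Tendsto (fun M : ℕ => ∑' n : ℕ, (aM M n : ℂ) * Complex.exp (-z) ^ n) atTop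
      (𝓝 (Complex.exp (GG z))) := by
    refine (tendsto_prod hz).congr (fun M => ((hasSum_aM hz M).tsum_eq).symm)
  rw [← tendsto_nhds_unique h h2]
  exact hs'.hasSum

end SqPart

open Filter Topology
namespace SqPart
open MeasureTheory

lemma integral_exp_int (j : ℤ) (hj : j ≠ 0) :
    ∫ θ in (-Real.pi)..Real.pi, Complex.exp (((j : ℂ) * Complex.I) * (θ : ℂ)) = 0 := by
  have hc : (j : ℂ) * Complex.I ≠ 0 := mul_ne_zero (by exact_mod_cast hj) Complex.I_ne_zero
  rw [integral_exp_mul_complex hc]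
  have : (j : ℂ) * Complex.I * (Real.pi : ℂ) =
      (j : ℂ) * Complex.I * ((-Real.pi : ℝ) : ℂ) + j * (2 * Real.pi * Complex.I) := by
    push_cast; ring
  rw [this, Complex.exp_add, Complex.exp_int_mul_two_pi_mul_I]
  simp

lemma cauchy_pSq {t : ℝ} (ht : 0 < t) (n : ℕ) :
    (pSq n : ℂ) * (2 * Real.pi) = ∫ θ in (-Real.pi)..Real.pi,
      Complex.exp (GG (t + θ * Complex.I)) * Complex.exp (n * (t + θ * Complex.I)) := by
  have hre : ∀ θ : ℝ, ((t : ℂ) + θ * Complex.I).re = t := by intro θ; simp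
  have hs := (summable_pSq ht).mul_right (Real.exp (n * t))
  have key := intervalIntegral.hasSum_integral_of_dominated_convergence (μ := volume)
    (a := -Real.pi) (b := Real.pi)
    (F := fun (k : ℕ) (θ : ℝ) => (pSq k : ℂ) * Complex.exp (-(t + θ * Complex.I)) ^ k *
      Complex.exp (n * (t + θ * Complex.I)))
    (f := fun θ : ℝ => Complex.exp (GG (t + θ * Complex.I)) *
      Complex.exp (n * (t + θ * Complex.I)))
    (bound := fun k _ => (pSq k : ℝ) * Real.exp (-t) ^ k * Real.exp (n * t))
    (fun k => by
      apply Continuous.aestronglyMeasurable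
      fun_prop)
    (fun k => by
      refine Eventually.of_forall (fun θ _ => ?_)
      rw [norm_mul, norm_mul, norm_pow, Complex.norm_exp, Complex.norm_exp]
      simp)
    (by exact Eventually.of_forall (fun θ _ => hs))
    (by simp)
    (by
      refine Eventually.of_forall (fun θ _ => ?_)
      exact (hasSum_pSq (by rw [hre]; exact ht)).mul_right _)
  have key2 : HasSum (fun k : ℕ => ∫ θ in (-Real.pi)..Real.pi, (pSq k : ℂ) *
      Complex.exp (-(t + θ * Complex.I)) ^ k * Complex.exp (n * (t + θ * Complex.I)))
      ((pSq n : ℂ) * (2 * Real.pi)) := by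
    convert! hasSum_single (f := fun k : ℕ => ∫ θ in (-Real.pi)..Real.pi, (pSq k : ℂ) *
      Complex.exp (-(t + θ * Complex.I)) ^ k * Complex.exp (n * (t + θ * Complex.I))) n ?_ using 1
    · have : ∀ θ : ℝ, (pSq n : ℂ) *
      Complex.exp (-(t + θ * Complex.I)) ^ n * Complex.exp (n * (t + θ * Complex.I)) = pSq n := by
        intro θ
        rw [exp_pow_eq, mul_assoc, ← Complex.exp_add]
        simp
      simp only [this, intervalIntegral.integral_const]
      rw [sub_neg_eq_add, Complex.real_smul]
      push_cast; ring
    · intro k hk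
      have : ∀ θ : ℝ, (pSq k : ℂ) *
          Complex.exp (-(t + θ * Complex.I)) ^ k * Complex.exp (n * (t + θ * Complex.I)) =
          (pSq k : ℂ) * Complex.exp (((n : ℂ) - k) * t) *
            Complex.exp ((((n - k : ℤ) : ℂ) * Complex.I) * (θ : ℂ)) := by
        intro θ
        rw [exp_pow_eq, mul_assoc, mul_assoc, ← Complex.exp_add, ← Complex.exp_add]
        congr 2
        push_cast; ring
      simp only [this]
      rw [intervalIntegral.integral_const_mul, integral_exp_int _ (by omega), mul_zero]
  exact key2.unique key

end SqPart

open Filter Topology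
namespace SqPart
open MeasureTheory

/-- oscillation sum -/
noncomputable def SS (N : ℕ) (θ : ℝ) : ℝ := ∑ m ∈ Finset.range N, (1 - Real.cos ((m + 1 : ℝ) ^ 2 * θ))

lemma SS_mono {M N : ℕ} (h : M ≤ N) (θ : ℝ) : SS M θ ≤ SS N θ := by
  unfold SS
  apply Finset.sum_le_sum_of_subset_of_nonneg
  · exact Finset.range_mono h
  · intro i _ _; linarith [Real.cos_le_one ((i + 1 : ℝ) ^ 2 * θ)]

lemma SS_abs (N : ℕ) (θ : ℝ) : SS N |θ| = SS N θ := by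
  unfold SS
  refine Finset.sum_congr rfl (fun m _ => ?_)
  rw [← Real.cos_abs ((m + 1 : ℝ) ^ 2 * θ), abs_mul, abs_of_nonneg (by positivity : (0:ℝ) ≤ (m + 1 : ℝ) ^ 2)]

lemma dterm_re (t θ : ℝ) (p : ℕ × ℕ) : (dterm (t + θ * Complex.I) p).re =
    Real.exp (-((p.2 + 1 : ℝ) ^ 2 * ((p.1 + 1 : ℝ) * t))) / (p.1 + 1 : ℝ) *
      Real.cos ((p.2 + 1 : ℝ) ^ 2 * ((p.1 + 1 : ℝ) * θ)) := by
  have h1 : dterm (t + θ * Complex.I) p =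
    ((1 / (p.1 + 1 : ℝ) : ℝ) : ℂ) * Complex.exp
      (((-((p.2 + 1 : ℝ) ^ 2 * ((p.1 + 1 : ℝ) * t)) : ℝ) : ℂ) +
        ((-((p.2 + 1 : ℝ) ^ 2 * ((p.1 + 1 : ℝ) * θ)) : ℝ) : ℂ) * Complex.I) := by
    unfold dterm
    rw [div_eq_mul_one_div, mul_comm]
    push_cast
    congr 2
    ring
  rw [h1, Complex.re_ofReal_mul, Complex.exp_re]
  simp only [Complex.add_re, Complex.ofReal_re, Complex.add_im, Complex.ofReal_im,
    Complex.mul_re, Complex.mul_im, Complex.I_re, Complex.I_im]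
  simp
  ring

lemma GG_re_le {t θ : ℝ} (ht : 0 < t) (N : ℕ) (hN : (N : ℝ) ^ 2 * t ≤ 1) :
    (GG (t + θ * Complex.I)).re ≤ (GG t).re - SS N θ / 3 := by
  have h1 : HasSum (fun p => (dterm (t + θ * Complex.I) p).re) (GG (t + θ * Complex.I)).re :=
    Complex.hasSum_re (GG_eq_tsum (by simpa using ht))
  have h2 : HasSum (fun p => (dterm (t + (0 : ℝ) * Complex.I) p).re)
      (GG (t + (0 : ℝ) * Complex.I)).re :=
    Complex.hasSum_re (GG_eq_tsum (by simpa using ht))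
  have h0 : ((t : ℂ) + (0 : ℝ) * Complex.I) = t := by simp
  have h3 := h2.sub h1
  rw [h0] at h3
  have hd0 : ∀ p, (dterm (t : ℂ) p).re = Real.exp (-((p.2 + 1 : ℝ) ^ 2 * ((p.1 + 1 : ℝ) * t))) /
      (p.1 + 1 : ℝ) * Real.cos ((p.2 + 1 : ℝ) ^ 2 * ((p.1 + 1 : ℝ) * 0)) := by
    intro p
    have := dterm_re t 0 p
    rwa [h0] at this
  have h4 := sum_le_hasSum (({0} : Finset ℕ) ×ˢ Finset.range N) (fun p _ => by
    rw [dterm_re, hd0, ← mul_sub]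
    apply mul_nonneg (by positivity)
    simp only [mul_zero, Real.cos_zero]
    linarith [Real.cos_le_one ((p.2 + 1 : ℝ) ^ 2 * ((p.1 + 1 : ℝ) * θ))]) h3
  rw [Finset.sum_product] at h4
  simp only [Finset.sum_singleton] at h4
  have h5 : SS N θ / 3 ≤ ∑ m ∈ Finset.range N,
      ((dterm (↑t) (0, m)).re - (dterm (↑t + ↑θ * Complex.I) (0, m)).re) := by
    unfold SS
    rw [Finset.sum_div]
    apply Finset.sum_le_sum
    intro m hm
    rw [dterm_re, hd0, ← mul_sub]
    simp only [mul_zero, Real.cos_zero, Nat.cast_zero, zero_add, one_mul, div_one]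
    have hm' : (m + 1 : ℝ) ≤ N := by exact_mod_cast Finset.mem_range.mp hm
    have h6 : (m + 1 : ℝ) ^ 2 * t ≤ 1 := by
      refine le_trans ?_ hN
      gcongr
    have h7 : (1 / 3 : ℝ) ≤ Real.exp (-((m + 1 : ℝ) ^ 2 * t)) := by
      have : Real.exp (-1) ≤ Real.exp (-((m + 1 : ℝ) ^ 2 * t)) := Real.exp_le_exp.mpr (by linarith)
      refine le_trans ?_ this
      rw [Real.exp_neg, one_div]
      apply inv_anti₀ (Real.exp_pos _)
      linarith [Real.exp_one_lt_d9]
    have h8 := Real.cos_le_one ((m + 1 : ℝ) ^ 2 * θ)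
    nlinarith
  linarith

lemma sum_pow4 (N : ℕ) : (N : ℝ) ^ 5 / 5 ≤ ∑ m ∈ Finset.range N, (m + 1 : ℝ) ^ 4 := by
  induction N with
  | zero => simp
  | succ N ih =>
    rw [Finset.sum_range_succ]
    push_cast
    have : (0 : ℝ) ≤ N := by positivity
    have : (0:ℝ) ≤ (N:ℝ)^2 := by positivity
    have : (0:ℝ) ≤ (N:ℝ)^3 := by positivity
    nlinarith

lemma SS_small {N : ℕ} {θ : ℝ} (h : (N : ℝ) ^ 2 * |θ| ≤ Real.pi) :
    θ ^ 2 * (N : ℝ) ^ 5 / 25 ≤ SS N θ := by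
  have h1 : ∀ m ∈ Finset.range N, θ ^ 2 / 5 * (m + 1 : ℝ) ^ 4 ≤
      1 - Real.cos ((m + 1 : ℝ) ^ 2 * θ) := by
    intro m hm
    have hm' : (m + 1 : ℝ) ≤ N := by exact_mod_cast Finset.mem_range.mp hm
    have hx : |(m + 1 : ℝ) ^ 2 * θ| ≤ Real.pi := by
      rw [abs_mul, abs_of_nonneg (by positivity : (0:ℝ) ≤ (m + 1 : ℝ) ^ 2)]
      refine le_trans ?_ h
      gcongr
    have h2 := Real.cos_le_one_sub_mul_cos_sq hx
    have h3 : (1 / 5 : ℝ) ≤ 2 / Real.pi ^ 2 := by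
      rw [div_le_div_iff₀ (by norm_num) (by positivity)]
      nlinarith [Real.pi_lt_d2, Real.pi_pos]
    have h4 : θ ^ 2 / 5 * (m + 1 : ℝ) ^ 4 = 1 / 5 * ((m + 1 : ℝ) ^ 2 * θ) ^ 2 := by ring
    rw [h4]
    have : 1 / 5 * ((m + 1 : ℝ) ^ 2 * θ) ^ 2 ≤ 2 / Real.pi ^ 2 * ((m + 1 : ℝ) ^ 2 * θ) ^ 2 := by
      gcongr
    linarith
  have h2 := Finset.sum_le_sum h1
  rw [← Finset.mul_sum] at h2
  have h3 := sum_pow4 N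
  have h4 : θ ^ 2 / 5 * ((N : ℝ) ^ 5 / 5) ≤ θ ^ 2 / 5 * ∑ m ∈ Finset.range N, (m + 1 : ℝ) ^ 4 := by
    gcongr
  unfold SS
  linarith

lemma floor_half {x : ℝ} (hx : 1 ≤ x) : x / 2 ≤ (⌊x⌋₊ : ℝ) := by
  have h1 := Nat.lt_floor_add_one x
  have h2 : (1 : ℝ) ≤ ⌊x⌋₊ := by exact_mod_cast (Nat.one_le_floor_iff x).mpr hx
  linarith

/-- near zero -/
lemma SS_near_zero {N : ℕ} {θ x : ℝ} (hx : 1 ≤ x) (hxN : x ≤ N) (h1 : |θ| * x ^ 2 ≤ 1)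
    (h2 : 1 ≤ |θ| * (N + 1 : ℝ) ^ 2) : x / 800 ≤ SS N θ := by
  have hθ : 0 < |θ| := by
    by_contra h
    have : |θ| = 0 := le_antisymm (not_lt.mp h) (abs_nonneg _)
    rw [this] at h2; norm_num at h2
  set y := 1 / Real.sqrt |θ| with hy
  have hs : 0 < Real.sqrt |θ| := Real.sqrt_pos.mpr hθ
  have hss : Real.sqrt |θ| ^ 2 = |θ| := Real.sq_sqrt hθ.le
  have hy2 : |θ| * y ^ 2 = 1 := by
    rw [hy, div_pow, hss]; field_simp
  have hypos : 0 < y := by positivity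
  have hxy : x ≤ y := by
    by_contra h
    push Not at h
    have : |θ| * y ^ 2 < |θ| * x ^ 2 := by gcongr
    linarith
  have hyN : y ≤ N + 1 := by
    by_contra h
    push Not at h
    have : |θ| * (N + 1 : ℝ) ^ 2 < |θ| * y ^ 2 := by gcongr
    linarith
  have hy1 : 1 ≤ y := hx.trans hxy
  set M := min N ⌊y⌋₊ with hM
  have hMy : (M : ℝ) ≤ y := le_trans (by exact_mod_cast min_le_right _ _) (Nat.floor_le hypos.le)
  have hMy2 : y / 2 ≤ (M : ℝ) := by
    rw [hM]
    rcases le_total N ⌊y⌋₊ with h | h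
    · rw [min_eq_left h]; 
      have : (1 : ℝ) ≤ N := hx.trans hxN
      linarith
    · rw [min_eq_right h]; exact floor_half hy1
  have h3 : SS M θ ≤ SS N θ := SS_mono (min_le_left _ _) θ
  have h4 : (M : ℝ) ^ 2 * |θ| ≤ Real.pi := by
    have : (M : ℝ) ^ 2 * |θ| ≤ y ^ 2 * |θ| := by gcongr
    linarith [Real.pi_gt_three]
  have h5 := SS_small h4
  have h6 : θ ^ 2 * (y / 2) ^ 5 / 25 ≤ θ ^ 2 * (M : ℝ) ^ 5 / 25 := by gcongr
  have h7 : θ ^ 2 * (y / 2) ^ 5 / 25 = y / 800 := by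
    have : θ ^ 2 * y ^ 4 = 1 := by
      rw [← sq_abs]
      calc |θ| ^ 2 * y ^ 4 = (|θ| * y ^ 2) ^ 2 := by ring
        _ = 1 := by rw [hy2]; ring
    calc θ ^ 2 * (y / 2) ^ 5 / 25 = (θ ^ 2 * y ^ 4) * y / 800 := by ring
      _ = _ := by rw [this]; ring
  linarith

lemma cos_diff (a b c : ℝ) : 1 - Real.cos (a - 2 * b + c) ≤
    4 * ((1 - Real.cos a) + 2 * (1 - Real.cos b) + (1 - Real.cos c)) := by
  have e : ∀ x, 1 - Real.cos x = 2 * Real.sin (x / 2) ^ 2 := by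
    intro x
    have := Real.cos_sq_add_sin_sq (x / 2)
    have h2 := Real.cos_two_mul (x / 2)
    rw [show 2 * (x / 2) = x by ring] at h2
    linarith
  have hadd : ∀ x y, |Real.sin (x + y)| ≤ |Real.sin x| + |Real.sin y| := by
    intro x y
    rw [Real.sin_add]
    refine (abs_add_le _ _).trans ?_
    rw [abs_mul, abs_mul]
    have h1 := Real.abs_cos_le_one x
    have h2 := Real.abs_cos_le_one y
    nlinarith [abs_nonneg (Real.sin x), abs_nonneg (Real.sin y)]
  rw [e, e, e, e]
  have h1 : |Real.sin ((a - 2 * b + c) / 2)| ≤ |Real.sin (a / 2)| + 2 * |Real.sin (b / 2)| +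
      |Real.sin (c / 2)| := by
    have : (a - 2 * b + c) / 2 = (a / 2 + c / 2) + (-(b / 2) + -(b / 2)) := by ring
    rw [this]
    have := hadd (a / 2 + c / 2) (-(b / 2) + -(b / 2))
    have := hadd (a / 2) (c / 2)
    have h := hadd (-(b / 2)) (-(b / 2))
    rw [Real.sin_neg, abs_neg] at h
    linarith
  rw [← sq_abs (Real.sin ((a - 2 * b + c) / 2)), ← sq_abs (Real.sin (a / 2)),
    ← sq_abs (Real.sin (b / 2)), ← sq_abs (Real.sin (c / 2))]
  have h2 : |Real.sin ((a - 2 * b + c) / 2)| ^ 2 ≤ (|Real.sin (a / 2)| + 2 * |Real.sin (b / 2)| +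
      |Real.sin (c / 2)|) ^ 2 := by gcongr
  set A := |Real.sin (a / 2)|
  set B := |Real.sin (b / 2)|
  set D := |Real.sin (c / 2)|
  nlinarith [sq_nonneg (A - B), sq_nonneg (B - D), sq_nonneg (A - D)]

lemma SS_diff (N : ℕ) (θ : ℝ) : (N : ℝ) * Real.sin θ ^ 2 ≤ 8 * SS (N + 2) θ := by
  have h1 : ∀ m ∈ Finset.range N, 2 * Real.sin θ ^ 2 ≤
      4 * ((1 - Real.cos ((m + 1 : ℝ) ^ 2 * θ)) + 2 * (1 - Real.cos (((m + 1 : ℕ) + 1 : ℝ) ^ 2 * θ))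
        + (1 - Real.cos (((m + 2 : ℕ) + 1 : ℝ) ^ 2 * θ))) := by
    intro m _
    have h := cos_diff ((m + 1 : ℝ) ^ 2 * θ) (((m + 1 : ℕ) + 1 : ℝ) ^ 2 * θ)
      (((m + 2 : ℕ) + 1 : ℝ) ^ 2 * θ)
    have h2 : ((m + 1 : ℝ) ^ 2 * θ) - 2 * (((m + 1 : ℕ) + 1 : ℝ) ^ 2 * θ) +
      (((m + 2 : ℕ) + 1 : ℝ) ^ 2 * θ) = 2 * θ := by push_cast; ring
    rw [h2, Real.cos_two_mul] at h
    have := Real.cos_sq_add_sin_sq θ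
    linarith
  have h2 := Finset.sum_le_sum h1
  rw [← Finset.mul_sum, ← Finset.mul_sum, Finset.sum_add_distrib, Finset.sum_add_distrib,
    ← Finset.mul_sum] at h2
  simp only [Finset.sum_const, Finset.card_range, nsmul_eq_mul] at h2
  have a1 : ∑ m ∈ Finset.range N, (1 - Real.cos ((m + 1 : ℝ) ^ 2 * θ)) ≤ SS (N + 2) θ :=
    SS_mono (by omega) θ
  have nn : ∀ x : ℝ, 0 ≤ 1 - Real.cos x := fun x => by linarith [Real.cos_le_one x]
  have a2 : ∑ m ∈ Finset.range N, (1 - Real.cos (((m + 1 : ℕ) + 1 : ℝ) ^ 2 * θ)) ≤ SS (N + 2) θ := by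
    refine le_trans ?_ (SS_mono (show N + 1 ≤ N + 2 by omega) θ)
    unfold SS
    rw [Finset.sum_range_succ']
    linarith [nn (((0 : ℕ) + 1 : ℝ) ^ 2 * θ)]
  have a3 : ∑ m ∈ Finset.range N, (1 - Real.cos (((m + 2 : ℕ) + 1 : ℝ) ^ 2 * θ)) ≤ SS (N + 2) θ := by
    unfold SS
    rw [Finset.sum_range_succ', Finset.sum_range_succ']
    have := nn (((0 : ℕ) + 1 : ℝ) ^ 2 * θ)
    have := nn (((0 + 1 : ℕ) + 1 : ℝ) ^ 2 * θ)
    simp only [Nat.add_assoc] at *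
    norm_num at *
    linarith
  linarith

/-- near pi -/
lemma SS_near_pi {N : ℕ} {θ x : ℝ} (hx : 1 ≤ x) (hxN : x ≤ N) (h0 : 0 ≤ Real.pi - θ)
    (h1 : (Real.pi - θ) * x ^ 2 ≤ 1) : x / 800 ≤ SS N θ := by
  set K := (⌊x⌋₊ + 1) / 2 with hK
  have hf : (⌊x⌋₊ : ℝ) ≤ x := Nat.floor_le (by linarith)
  have hKN : 2 * K ≤ ⌊x⌋₊ + 1 := by omega
  have hfN : ⌊x⌋₊ ≤ N := by exact_mod_cast hf.trans hxN
  have h2 : (K : ℝ) ≤ SS N θ := by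
    have h3 : ∑ k ∈ Finset.range K, (1 : ℝ) ≤ ∑ m ∈ (Finset.range K).image (fun k : ℕ => 2 * k),
        (1 - Real.cos ((m + 1 : ℝ) ^ 2 * θ)) := by
      rw [Finset.sum_image (by intro a _ b _ h; simp only at h; omega)]
      apply Finset.sum_le_sum
      intro k hk
      have hk' := Finset.mem_range.mp hk
      have hk2 : 2 * k + 1 ≤ ⌊x⌋₊ := by omega
      have hk3 : (2 * k + 1 : ℝ) ≤ x := le_trans (by exact_mod_cast hk2) hf
      have h4 : (((2 * k : ℕ) : ℝ) + 1) ^ 2 * θ =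
          (Real.pi - (2 * k + 1 : ℝ) ^ 2 * (Real.pi - θ)) + ((2 * k ^ 2 + 2 * k : ℕ) : ℝ) * (2 * Real.pi) := by
        push_cast; ring
      rw [h4, Real.cos_add_nat_mul_two_pi, Real.cos_pi_sub]
      have h5 : 0 ≤ Real.cos ((2 * k + 1 : ℝ) ^ 2 * (Real.pi - θ)) := by
        apply Real.cos_nonneg_of_neg_pi_div_two_le_of_le
        · have : 0 ≤ (2 * k + 1 : ℝ) ^ 2 * (Real.pi - θ) := by positivity
          linarith [Real.pi_pos]
        · have : (2 * k + 1 : ℝ) ^ 2 * (Real.pi - θ) ≤ x ^ 2 * (Real.pi - θ) := by gcongr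
          linarith [Real.pi_gt_three]
      linarith
    simp only [Finset.sum_const, Finset.card_range, nsmul_eq_mul, mul_one] at h3
    refine h3.trans ?_
    unfold SS
    apply Finset.sum_le_sum_of_subset_of_nonneg
    · intro m hm
      obtain ⟨k, hk, rfl⟩ := Finset.mem_image.mp hm
      have hk' := Finset.mem_range.mp hk
      apply Finset.mem_range.mpr
      omega
    · intro i _ _; linarith [Real.cos_le_one ((i + 1 : ℝ) ^ 2 * θ)]
  have h3 : (⌊x⌋₊ : ℝ) ≤ 2 * K := by
    have : ⌊x⌋₊ ≤ 2 * K := by omega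
    exact_mod_cast this
  linarith [floor_half hx]

lemma SS_minor {N : ℕ} {θ x : ℝ} (hN : 3 ≤ N) (hx : 1 ≤ x) (hxN : x ^ 5 = N) (hpi : |θ| ≤ Real.pi)
    (h2 : 1 ≤ |θ| * (N + 1 : ℝ) ^ 2) : x / 800 ≤ SS N θ := by
  rw [← SS_abs]
  have hθ0 : 0 ≤ |θ| := abs_nonneg θ
  have h2' : 1 ≤ |(|θ|)| * (N + 1 : ℝ) ^ 2 := by rwa [abs_abs]
  generalize |θ| = φ at *
  have hxN' : x ≤ N := by
    rw [← hxN]; exact le_self_pow₀ hx (by norm_num)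
  have hsin : 0 ≤ Real.sin φ := Real.sin_nonneg_of_nonneg_of_le_pi hθ0 hpi
  by_cases hc : 1 ≤ 2 * x ^ 2 * Real.sin φ
  · have h := SS_diff (N - 2) φ
    rw [Nat.sub_add_cancel (by omega)] at h
    have hN3 : (N : ℝ) / 3 ≤ ((N - 2 : ℕ) : ℝ) := by
      rw [Nat.cast_sub (by omega)]
      have : (3 : ℝ) ≤ N := by exact_mod_cast hN
      push_cast; linarith
    have h3 : (N : ℝ) / 3 * Real.sin φ ^ 2 ≤ 8 * SS N φ := le_trans (by gcongr) h
    rw [← hxN] at h3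
    have h4 : x ≤ x * (2 * x ^ 2 * Real.sin φ) ^ 2 := by
      have : 1 ≤ (2 * x ^ 2 * Real.sin φ) ^ 2 := one_le_pow₀ hc
      nlinarith
    have h5 : x * (2 * x ^ 2 * Real.sin φ) ^ 2 = 12 * (x ^ 5 / 3 * Real.sin φ ^ 2) := by ring
    linarith
  · push Not at hc
    rcases le_total φ (Real.pi / 2) with h | h
    · have h3 := Real.mul_le_sin hθ0 h
      have h4 : φ ≤ 2 * Real.sin φ := by
        have : (1 / 2 : ℝ) ≤ 2 / Real.pi := by
          rw [div_le_div_iff₀ (by norm_num) Real.pi_pos]; linarith [Real.pi_le_four]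
        nlinarith
      apply SS_near_zero hx hxN' _ h2'
      rw [abs_of_nonneg hθ0]
      nlinarith [sq_nonneg x]
    · have h3 := Real.mul_le_sin (x := Real.pi - φ) (by linarith) (by linarith)
      rw [Real.sin_pi_sub] at h3
      have h4 : Real.pi - φ ≤ 2 * Real.sin φ := by
        have : (1 / 2 : ℝ) ≤ 2 / Real.pi := by
          rw [div_le_div_iff₀ (by norm_num) Real.pi_pos]; linarith [Real.pi_le_four]
        nlinarith
      apply SS_near_pi hx hxN' (by linarith)
      nlinarith [sq_nonneg x]

lemma domination : ∃ K : ℝ, ∀ τ θ : ℝ, 0 < τ → τ ≤ 1 / 2 → |θ| ≤ Real.pi →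
    Real.exp ((GG ((τ ^ 4 : ℝ) + θ * Complex.I)).re - (GG ((τ ^ 4 : ℝ) : ℂ)).re) *
      (1 + (θ / τ ^ 5) ^ 2) ≤ K := by
  set B : ℝ := 2400 ^ 25 * (Nat.factorial 25 : ℝ) with hB
  have hBpos : 0 < B := by positivity
  refine ⟨2400 + (1 + 320 * B), fun τ θ hτ hτ2 hθ => ?_⟩
  have hy : (4 : ℝ) ≤ 1 / τ ^ 2 := by
    rw [le_div_iff₀ (by positivity)]; nlinarith
  set y := 1 / τ ^ 2 with hydef
  set N := ⌊y⌋₊ with hN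
  have hNy : (N : ℝ) ≤ y := Nat.floor_le (by linarith)
  have hyN : y / 2 ≤ N := floor_half (by linarith)
  have hyN1 : y ≤ N + 1 := (Nat.lt_floor_add_one y).le
  have hN3 : 3 ≤ N := by
    apply Nat.le_floor; push_cast; linarith
  have hyτ : y ^ 2 * τ ^ 4 = 1 := by rw [hydef]; field_simp
  have h1 : (N : ℝ) ^ 2 * τ ^ 4 ≤ 1 := by
    rw [← hyτ]; gcongr
  have hG := GG_re_le (θ := θ) (pow_pos hτ 4) N h1
  set E := (GG ((τ ^ 4 : ℝ) + θ * Complex.I)).re - (GG ((τ ^ 4 : ℝ) : ℂ)).re with hE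
  have hE1 : E ≤ -(SS N θ / 3) := by rw [hE]; linarith
  set w := (θ / τ ^ 5) ^ 2 with hw
  have hwpos : 0 ≤ w := sq_nonneg _
  have hwy : w = θ ^ 2 * y ^ 5 := by rw [hw, hydef]; field_simp
  rcases le_total |θ| (τ ^ 4) with hc | hc
  · have h2 : (N : ℝ) ^ 2 * |θ| ≤ Real.pi := by
      have : (N : ℝ) ^ 2 * |θ| ≤ (N : ℝ) ^ 2 * τ ^ 4 := by gcongr
      linarith [Real.pi_gt_three]
    have h3 := SS_small h2
    have h4 : θ ^ 2 * (y / 2) ^ 5 / 25 ≤ θ ^ 2 * (N : ℝ) ^ 5 / 25 := by gcongr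
    have h5 : θ ^ 2 * (y / 2) ^ 5 / 25 = w / 800 := by rw [hwy]; ring
    have h6 : Real.exp E ≤ Real.exp (-(w / 2400)) := Real.exp_le_exp.mpr (by linarith)
    have h7 : 1 + w ≤ 2400 * Real.exp (w / 2400) := by
      have := Real.add_one_le_exp (w / 2400)
      linarith
    calc Real.exp E * (1 + w) ≤ Real.exp (-(w / 2400)) * (2400 * Real.exp (w / 2400)) := by gcongr
      _ = 2400 := by
        rw [Real.exp_neg]; field_simp
      _ ≤ _ := by linarith
  · have h2 : 1 ≤ |θ| * (N + 1 : ℝ) ^ 2 := by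
      calc (1 : ℝ) = τ ^ 4 * y ^ 2 := by rw [← hyτ]; ring
        _ ≤ _ := by gcongr
    set x := (N : ℝ) ^ (1 / 5 : ℝ) with hx
    have hx5 : x ^ 5 = N := by
      rw [hx, ← Real.rpow_natCast, ← Real.rpow_mul (by positivity)]; norm_num
    have hN1 : (1 : ℝ) ≤ N := by exact_mod_cast (by omega : 1 ≤ N)
    have hx1 : 1 ≤ x := Real.one_le_rpow hN1 (by norm_num)
    have h3 := SS_minor hN3 hx1 hx5 hθ h2
    have h6 : Real.exp E ≤ Real.exp (-(x / 2400)) := Real.exp_le_exp.mpr (by linarith)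
    have h7 : w ≤ 320 * x ^ 25 := by
      have hπ : θ ^ 2 ≤ 10 := by
        rw [← sq_abs]
        have : |θ| ^ 2 ≤ Real.pi ^ 2 := by gcongr
        nlinarith [Real.pi_lt_d2, Real.pi_pos]
      rw [hwy]
      calc θ ^ 2 * y ^ 5 ≤ 10 * (2 * N) ^ 5 := by
            gcongr; linarith
        _ = 320 * x ^ 25 := by rw [← hx5]; ring
    have h8 : x ^ 25 ≤ B * Real.exp (x / 2400) := by
      have := Real.pow_div_factorial_le_exp (x / 2400) (by positivity) 25
      rw [div_le_iff₀ (by positivity), div_pow, div_le_iff₀ (by positivity)] at this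
      rw [hB]; linarith
    have h9 : 1 + w ≤ (1 + 320 * B) * Real.exp (x / 2400) := by
      have : 1 ≤ Real.exp (x / 2400) := Real.one_le_exp (by positivity)
      linarith
    calc Real.exp E * (1 + w) ≤ Real.exp (-(x / 2400)) * ((1 + 320 * B) * Real.exp (x / 2400)) := by
          gcongr
      _ = 1 + 320 * B := by
        rw [Real.exp_neg]; field_simp
      _ ≤ _ := by linarith

end SqPart

open Filter Topology
namespace SqPart
open MeasureTheory

lemma cpow_ofReal_mul {r : ℝ} (hr : 0 < r) {x : ℂ} (hx : x ≠ 0) (s : ℂ) :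
    ((r : ℂ) * x) ^ s = (r : ℂ) ^ s * x ^ s := by
  have hr' : (r : ℂ) ≠ 0 := by exact_mod_cast hr.ne'
  rw [Complex.cpow_def_of_ne_zero (mul_ne_zero hr' hx), Complex.cpow_def_of_ne_zero hr',
    Complex.cpow_def_of_ne_zero hx, ← Complex.exp_add, Complex.log_ofReal_mul hr hx,
    Complex.ofReal_log hr.le]
  ring_nf

/-- the regularised theta function -/
noncomputable def W (u : ℂ) : ℂ :=
  ((Real.sqrt Real.pi : ℝ) : ℂ) * u ^ (-(1 / 2) : ℂ) - 2 * Psi u - Complex.exp (-u)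

lemma Psi_theta {u : ℂ} (hu : 0 < u.re) :
    Psi u = (jacobiTheta (Complex.I * u / Real.pi) - 1) / 2 := by
  have hp := Real.pi_pos
  have him : (Complex.I * u / Real.pi).im = u.re / Real.pi := by
    rw [Complex.div_ofReal_im]; simp
  rw [← (hasSum_nat_jacobiTheta (τ := Complex.I * u / Real.pi) (by rw [him]; positivity)).tsum_eq]
  unfold Psi
  refine tsum_congr (fun m => ?_)
  congr 1
  have : (Real.pi : ℂ) ≠ 0 := by exact_mod_cast hp.ne'
  field_simp
  rw [Complex.I_sq]; ring

lemma Psi_bound {u : ℂ} (hu : 0 < u.re) :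
    ‖Psi u‖ ≤ Real.exp (-u.re) / (1 - Real.exp (-u.re)) := by
  have hp := Real.pi_pos
  have him : (Complex.I * u / Real.pi).im = u.re / Real.pi := by
    rw [Complex.div_ofReal_im]; simp
  have := norm_jacobiTheta_sub_one_le (τ := Complex.I * u / Real.pi) (by rw [him]; positivity)
  rw [him] at this
  have e : -Real.pi * (u.re / Real.pi) = -u.re := by field_simp
  rw [e] at this
  rw [Psi_theta hu, norm_div, Complex.norm_ofNat]
  calc _ ≤ (2 / (1 - Real.exp (-u.re)) * Real.exp (-u.re)) / 2 := by gcongr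
    _ = _ := by ring

lemma continuousAt_Psi {u : ℂ} (hu : 0 < u.re) : ContinuousAt Psi u := by
  have hp := Real.pi_pos
  have him : (Complex.I * u / Real.pi).im = u.re / Real.pi := by
    rw [Complex.div_ofReal_im]; simp
  have h1 : ContinuousAt (fun u : ℂ => (jacobiTheta (Complex.I * u / Real.pi) - 1) / 2) u := by
    have h2 : ContinuousAt (fun u : ℂ => jacobiTheta (Complex.I * u / Real.pi)) u :=
      ContinuousAt.comp (g := jacobiTheta) (f := fun u : ℂ => Complex.I * u / Real.pi)
        (continuousAt_jacobiTheta (by rw [him]; positivity)) (by fun_prop)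
    exact (h2.sub continuousAt_const).div_const 2
  refine h1.congr ?_
  have : {v : ℂ | 0 < v.re} ∈ 𝓝 u := (isOpen_lt continuous_const Complex.continuous_re).mem_nhds hu
  filter_upwards [this] with v hv
  exact (Psi_theta hv).symm

lemma continuousAt_W {u : ℂ} (hu : 0 < u.re) : ContinuousAt W u := by
  unfold W
  refine ((continuousAt_const.mul ?_).sub (continuousAt_const.mul (continuousAt_Psi hu))).sub
    (by fun_prop)
  exact continuousAt_id.cpow continuousAt_const (Or.inl hu)

lemma sqrt_pi_cpow : ((Real.pi⁻¹ : ℝ) : ℂ) ^ (1 / 2 : ℂ) = ((Real.sqrt Real.pi : ℝ) : ℂ)⁻¹ := by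
  have hp := Real.pi_pos
  have : ((1 / 2 : ℝ) : ℂ) = (1 / 2 : ℂ) := by push_cast; rfl
  rw [← this, ← Complex.ofReal_cpow (by positivity), ← Real.sqrt_eq_rpow, Real.sqrt_inv]
  push_cast; rfl

lemma jacobi_sum {a : ℂ} : ∑' n : ℤ, Complex.exp (-Real.pi * a * (n : ℂ) ^ 2) =
    jacobiTheta (Complex.I * a) := by
  unfold jacobiTheta
  refine tsum_congr (fun m => ?_)
  congr 1
  linear_combination (-Real.pi * a * (m : ℂ) ^ 2) * Complex.I_sq

lemma W_eq {u : ℂ} (hu : 0 < u.re) : W u = 1 - Complex.exp (-u) -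
    2 * (((Real.sqrt Real.pi : ℝ) : ℂ) * u ^ (-(1 / 2) : ℂ)) * Psi (Real.pi ^ 2 / u) := by
  have hp := Real.pi_pos
  have hpc : (Real.pi : ℂ) ≠ 0 := by exact_mod_cast hp.ne'
  have hu0 : u ≠ 0 := by rintro rfl; simp at hu
  have hre : (u / Real.pi).re = u.re / Real.pi := by rw [Complex.div_ofReal_re]
  have hre2 : 0 < (Real.pi ^ 2 / u : ℂ).re := by
    have : (Real.pi ^ 2 / u : ℂ) = ((Real.pi ^ 2 : ℝ) : ℂ) * u⁻¹ := by push_cast; rfl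
    rw [this, Complex.re_ofReal_mul, Complex.inv_re]
    have := Complex.normSq_pos.mpr hu0
    positivity
  have h := Complex.tsum_exp_neg_mul_int_sq (a := u / Real.pi) (by rw [hre]; positivity)
  have h2 : ∀ n : ℤ, (-Real.pi / (u / Real.pi) * (n : ℂ) ^ 2 : ℂ) =
      -Real.pi * (Real.pi / u) * (n : ℂ) ^ 2 := by intro n; field_simp
  simp_rw [h2] at h
  rw [jacobi_sum, jacobi_sum] at h
  have e1 := Psi_theta hu
  have e2 := Psi_theta hre2
  have a1 : Complex.I * u / Real.pi = Complex.I * (u / Real.pi) := by ring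
  have a2 : Complex.I * (Real.pi ^ 2 / u) / Real.pi = Complex.I * (Real.pi / u) := by field_simp
  rw [a1] at e1
  rw [a2] at e2
  have hs : (1 / (u / Real.pi) ^ (1 / 2 : ℂ) : ℂ) =
      ((Real.sqrt Real.pi : ℝ) : ℂ) * u ^ (-(1 / 2) : ℂ) := by
    have : (u / Real.pi : ℂ) = ((Real.pi⁻¹ : ℝ) : ℂ) * u := by push_cast; field_simp
    rw [this, cpow_ofReal_mul (by positivity) hu0, sqrt_pi_cpow, Complex.cpow_neg]
    field_simp
  rw [hs] at h
  unfold W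
  have e1' : 2 * Psi u = jacobiTheta (Complex.I * (u / Real.pi)) - 1 := by rw [e1]; ring
  have e2' : jacobiTheta (Complex.I * (Real.pi / u)) = 1 + 2 * Psi (Real.pi ^ 2 / u) := by
    rw [e2]; ring
  rw [e1', h, e2']
  ring

lemma norm_upow {u : ℂ} (hu : 0 < u.re) :
    ‖u ^ (-(1 / 2) : ℂ)‖ ≤ u.re ^ (-(1 / 2) : ℝ) := by
  have : ((-(1 / 2) : ℝ) : ℂ) = (-(1 / 2) : ℂ) := by push_cast; rfl
  rw [← this, Complex.norm_cpow_real]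
  exact Real.rpow_le_rpow_of_nonpos hu (Complex.re_le_norm u) (by norm_num)

end SqPart

open Filter Topology
namespace SqPart
open MeasureTheory

lemma exp_neg_div_le {x : ℝ} (hx : 0 < x) : Real.exp (-x) / (1 - Real.exp (-x)) ≤ 1 / x := by
  have h := Real.add_one_le_exp x
  have h1 : Real.exp (-x) < 1 := Real.exp_lt_one_iff.mpr (by linarith)
  rw [div_le_div_iff₀ (by linarith) hx]
  have : Real.exp (-x) * Real.exp x = 1 := by rw [← Real.exp_add]; simp
  nlinarith [Real.exp_pos (-x)]

lemma exp_neg_le_sq {y : ℝ} (hy : 1 ≤ y) :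
    Real.exp (-y) / (1 - Real.exp (-y)) ≤ 4 / y ^ 2 := by
  have h := Real.quadratic_le_exp_of_nonneg (by linarith : 0 ≤ y)
  have h1 : Real.exp (-y) < 1 := Real.exp_lt_one_iff.mpr (by linarith)
  rw [div_le_div_iff₀ (by linarith) (by positivity)]
  have : Real.exp (-y) * Real.exp y = 1 := by rw [← Real.exp_add]; simp
  have h2 : Real.exp (-y) * (4 + y ^ 2) ≤ Real.exp (-y) * (4 * Real.exp y) := by
    apply mul_le_mul_of_nonneg_left _ (Real.exp_pos _).le
    nlinarith
  nlinarith

lemma sqrt_pi_le : Real.sqrt Real.pi ≤ 2 := by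
  rw [Real.sqrt_le_left (by norm_num)]
  linarith [Real.pi_le_four]

lemma W_bound_small {u : ℂ} (hu : 0 < u.re) (him : |u.im| ≤ u.re) (h : u.re ≤ 1 / 2) :
    ‖W u‖ ≤ 5 * u.re := by
  set x := u.re with hx
  have hu0 : u ≠ 0 := by rintro rfl; simp [hx] at hu
  have hn : ‖u‖ ≤ 2 * x := by
    have := Complex.norm_le_abs_re_add_abs_im u
    rw [← hx, abs_of_pos hu] at this
    linarith
  have hnsq : Complex.normSq u ≤ 2 * x ^ 2 := by
    rw [Complex.normSq_apply, ← hx]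
    have := sq_abs u.im
    nlinarith [abs_nonneg u.im]
  have hre2 : 4 / x ≤ (Real.pi ^ 2 / u : ℂ).re := by
    have : (Real.pi ^ 2 / u : ℂ) = ((Real.pi ^ 2 : ℝ) : ℂ) * u⁻¹ := by push_cast; rfl
    rw [this, Complex.re_ofReal_mul, Complex.inv_re, ← hx]
    have h0 := Complex.normSq_pos.mpr hu0
    have : (8:ℝ) ≤ Real.pi ^ 2 := by nlinarith [Real.pi_gt_three]
    calc 4 / x = 8 * (x / (2 * x ^ 2)) := by field_simp; norm_num
      _ ≤ _ := by gcongr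
  set y := (Real.pi ^ 2 / u : ℂ).re with hy
  have h4 : 8 ≤ 4 / x := by rw [le_div_iff₀ hu]; linarith
  have hP : ‖Psi (Real.pi ^ 2 / u)‖ ≤ x ^ 2 / 4 := by
    refine (Psi_bound (by rw [← hy]; linarith)).trans ?_
    rw [← hy]
    refine (exp_neg_le_sq (by linarith)).trans ?_
    calc 4 / y ^ 2 ≤ 4 / (4 / x) ^ 2 := by gcongr
      _ = x ^ 2 / 4 := by field_simp
  have hp : ‖u ^ (-(1 / 2) : ℂ)‖ ≤ x⁻¹ := by
    refine (norm_upow hu).trans ?_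
    rw [← hx, ← Real.rpow_neg_one]
    exact Real.rpow_le_rpow_of_exponent_ge hu (by linarith) (by norm_num)
  have he : ‖1 - Complex.exp (-u)‖ ≤ 4 * x := by
    rw [norm_sub_rev]
    refine (Complex.norm_exp_sub_one_le (by rw [norm_neg]; linarith)).trans ?_
    rw [norm_neg]; linarith
  rw [W_eq hu]
  refine (norm_sub_le _ _).trans ?_
  rw [norm_mul, norm_mul, norm_mul, Complex.norm_ofNat, Complex.norm_real, Real.norm_eq_abs,
    abs_of_nonneg (Real.sqrt_nonneg _)]
  have : 2 * (Real.sqrt Real.pi * ‖u ^ (-(1 / 2) : ℂ)‖) * ‖Psi (Real.pi ^ 2 / u)‖ ≤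
      2 * (2 * x⁻¹) * (x ^ 2 / 4) := by
    gcongr
    exact sqrt_pi_le
  have h6 : 2 * (2 * x⁻¹) * (x ^ 2 / 4) = x := by field_simp; norm_num
  linarith

lemma W_bound_large {u : ℂ} (hu : 1 / 2 ≤ u.re) :
    ‖W u‖ ≤ 8 * u.re ^ (-(1 / 2) : ℝ) := by
  have hu' : 0 < u.re := by linarith
  have h1 := norm_upow hu'
  have h2 := (Psi_bound hu').trans (exp_neg_div_le hu')
  have h3 : ‖Complex.exp (-u)‖ ≤ 1 / u.re := by
    rw [Complex.norm_exp, Complex.neg_re]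
    refine le_trans ?_ (exp_neg_div_le hu')
    rw [le_div_iff₀]
    · nlinarith [Real.exp_pos (-u.re)]
    · linarith [Real.exp_lt_one_iff.mpr (by linarith : -u.re < 0)]
  set s := u.re ^ (-(1 / 2) : ℝ) with hs
  have hspos : 0 < s := by positivity
  have hs2 : s * s = 1 / u.re := by
    rw [hs, ← Real.rpow_add hu']; norm_num [Real.rpow_neg_one]
  have h5 : 1 / u.re ≤ 2 * s := by
    rw [← hs2]
    have : 1 / u.re ≤ 2 := by rw [div_le_iff₀ hu']; linarith
    nlinarith
  unfold W
  refine (norm_sub_le _ _).trans ?_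
  refine (add_le_add_left (norm_sub_le _ _) _).trans ?_
  rw [norm_mul, norm_mul, Complex.norm_ofNat, Complex.norm_real, Real.norm_eq_abs,
    abs_of_nonneg (Real.sqrt_nonneg _)]
  have : Real.sqrt Real.pi * ‖u ^ (-(1 / 2) : ℂ)‖ ≤ 2 * s := by
    gcongr
    exact sqrt_pi_le
  linarith

lemma W_bound {u : ℂ} (hu : 0 < u.re) (him : |u.im| ≤ u.re) :
    ‖W u‖ ≤ 72 * (u.re * (1 + u.re) ^ (-(3 / 2) : ℝ)) := by
  set x := u.re with hx
  rcases le_total x (1 / 2) with h | h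
  · refine (W_bound_small hu him h).trans ?_
    rw [← hx]
    have : (1 / 4 : ℝ) ≤ (1 + x) ^ (-(3 / 2) : ℝ) := by
      calc (1 / 4 : ℝ) = (2:ℝ) ^ (-2 : ℝ) := by rw [Real.rpow_neg (by norm_num)]; norm_num
        _ ≤ (2:ℝ) ^ (-(3 / 2) : ℝ) := Real.rpow_le_rpow_of_exponent_le (by norm_num) (by norm_num)
        _ ≤ _ := Real.rpow_le_rpow_of_nonpos (by linarith) (by linarith) (by norm_num)
    nlinarith
  · refine (W_bound_large h).trans ?_
    rw [← hx]
    have h1 : (3 * x) ^ (-(3 / 2) : ℝ) ≤ (1 + x) ^ (-(3 / 2) : ℝ) :=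
      Real.rpow_le_rpow_of_nonpos (by linarith) (by linarith) (by norm_num)
    rw [Real.mul_rpow (by norm_num) hu.le] at h1
    have h2 : (1 / 9 : ℝ) ≤ (3:ℝ) ^ (-(3 / 2) : ℝ) := by
      calc (1 / 9 : ℝ) = (3:ℝ) ^ (-2 : ℝ) := by rw [Real.rpow_neg (by norm_num)]; norm_num
        _ ≤ _ := Real.rpow_le_rpow_of_exponent_le (by norm_num) (by norm_num)
    have h3 : x ^ (-(1 / 2) : ℝ) = x * x ^ (-(3 / 2) : ℝ) := by
      nth_rewrite 2 [← Real.rpow_one x]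
      rw [← Real.rpow_add hu]; norm_num
    have h4 : 0 < x ^ (-(3 / 2) : ℝ) := by positivity
    rw [h3]
    have : x ^ (-(3 / 2) : ℝ) ≤ 9 * (1 + x) ^ (-(3 / 2) : ℝ) := by nlinarith
    nlinarith

/-- the dominating function -/
noncomputable def DD (x : ℝ) : ℝ := 72 * (1 + x) ^ (-(3 / 2) : ℝ)

lemma DD_integrable : IntegrableOn DD (Set.Ioi 0) := by
  have h := (integrableOn_add_rpow_Ioi_of_lt (a := -(3 / 2)) (c := 0) (m := 1) (by norm_num)
    (by norm_num)).const_mul 72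
  refine h.congr (ae_of_all _ fun x => ?_)
  simp [DD, add_comm]

lemma DD_nonneg {x : ℝ} (hx : 0 < x) : 0 ≤ DD x := by unfold DD; positivity

lemma DD_anti {x y : ℝ} (hx : 0 < x) (h : x ≤ y) : DD y ≤ DD x := by
  unfold DD
  have := Real.rpow_le_rpow_of_nonpos (by linarith : 0 < 1 + x) (by linarith : 1 + x ≤ 1 + y)
    (by norm_num : (-(3 / 2) : ℝ) ≤ 0)
  linarith

lemma W_div_bound {u : ℂ} (hu : 0 < u.re) (him : |u.im| ≤ u.re) :
    ‖W u / (u.re : ℂ)‖ ≤ DD u.re := by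
  rw [norm_div, Complex.norm_real, Real.norm_eq_abs, abs_of_pos hu, div_le_iff₀ hu]
  refine (W_bound hu him).trans (le_of_eq ?_)
  unfold DD; ring

end SqPart

open Filter Topology
namespace SqPart
open MeasureTheory

lemma ceil_of_mem {k : ℕ} {x : ℝ} (hx : x ∈ Set.Ioc (k : ℝ) (k + 1)) : ⌈x⌉₊ = k + 1 := by
  rw [Nat.ceil_eq_iff (by omega)]
  constructor
  · simpa using hx.1
  · push_cast; exact hx.2

lemma hasSum_step (G : ℕ → ℂ) (hG : IntegrableOn (fun x : ℝ => G ⌈x⌉₊) (Set.Ioi 0)) :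
    HasSum (fun k : ℕ => G (k + 1)) (∫ x in Set.Ioi (0:ℝ), G ⌈x⌉₊) := by
  have hU : (⋃ k : ℕ, Set.Ioc (k : ℝ) (k + 1)) = Set.Ioi 0 := by
    ext x
    simp only [Set.mem_iUnion, Set.mem_Ioc, Set.mem_Ioi]
    constructor
    · rintro ⟨k, h1, h2⟩
      exact lt_of_le_of_lt (by positivity) h1
    · intro hx
      have h0 : 0 < ⌈x⌉₊ := Nat.ceil_pos.mpr hx
      refine ⟨⌈x⌉₊ - 1, ?_, ?_⟩
      · apply Nat.lt_ceil.mp; omega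
      · have : ((⌈x⌉₊ - 1 : ℕ) : ℝ) + 1 = ⌈x⌉₊ := by
          rw [Nat.cast_sub (by omega)]; simp
        rw [this]; exact Nat.le_ceil x
  have h := hasSum_integral_iUnion (μ := volume) (s := fun k : ℕ => Set.Ioc (k : ℝ) (k + 1))
    (f := fun x : ℝ => G ⌈x⌉₊) (fun i => measurableSet_Ioc) (by
      intro i j hij
      apply Set.disjoint_left.mpr
      intro x hi hj
      have := (ceil_of_mem hi).symm.trans (ceil_of_mem hj)
      omega) (by rw [hU]; exact hG)
  rw [hU] at h
  refine h.congr_fun ?_ |> fun h => h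
  intro k
  have : ∫ x in Set.Ioc (k : ℝ) (k + 1), G ⌈x⌉₊ = ∫ x in Set.Ioc (k : ℝ) (k + 1), G (k + 1) := by
    apply setIntegral_congr_fun measurableSet_Ioc
    intro x hx
    simp only [ceil_of_mem hx]
  rw [this]; simp

/-- step function -/
noncomputable def FF (z : ℂ) (x : ℝ) : ℂ :=
  W ((⌈x / z.re⌉₊ : ℂ) * z) / ((⌈x / z.re⌉₊ : ℝ) * z.re : ℝ)

lemma FF_bound {z : ℂ} (hz : 0 < z.re) (him : |z.im| ≤ z.re) {x : ℝ} (hx : 0 < x) :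
    ‖FF z x‖ ≤ DD x := by
  set k := ⌈x / z.re⌉₊ with hk
  have hk0 : 0 < k := Nat.ceil_pos.mpr (by positivity)
  have hk0' : (0:ℝ) < k := by exact_mod_cast hk0
  have hre : ((k : ℂ) * z).re = (k : ℝ) * z.re := by simp
  have him' : ((k : ℂ) * z).im = (k : ℝ) * z.im := by simp
  have h := W_div_bound (u := (k : ℂ) * z) (by rw [hre]; positivity) (by
    rw [hre, him', abs_mul, abs_of_pos hk0']; gcongr)
  rw [hre] at h
  unfold FF
  rw [← hk]
  refine h.trans (DD_anti hx ?_)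
  rw [← div_le_iff₀ hz]
  exact Nat.le_ceil _

lemma FF_meas (z : ℂ) : Measurable (FF z) := by
  have : FF z = (fun k : ℕ => W ((k : ℂ) * z) / ((k : ℝ) * z.re : ℝ)) ∘ (fun x : ℝ => ⌈x / z.re⌉₊) := rfl
  rw [this]
  exact (measurable_of_countable _).comp (Nat.measurable_ceil.comp (measurable_id.div_const _))

lemma FF_integrable {z : ℂ} (hz : 0 < z.re) (him : |z.im| ≤ z.re) :
    IntegrableOn (FF z) (Set.Ioi 0) := by
  refine DD_integrable.mono' (FF_meas z).aestronglyMeasurable ?_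
  filter_upwards [ae_restrict_mem measurableSet_Ioi] with x hx
  exact FF_bound hz him hx

lemma hasSum_W {z : ℂ} (hz : 0 < z.re) (him : |z.im| ≤ z.re) :
    HasSum (fun k : ℕ => W ((k + 1 : ℂ) * z) / (k + 1 : ℂ)) (∫ x in Set.Ioi (0:ℝ), FF z x) := by
  set G : ℕ → ℂ := fun k => W ((k : ℂ) * z) / ((k : ℝ) * z.re : ℝ) with hG
  have h1 : ∀ x, FF z (z.re * x) = G ⌈x⌉₊ := by
    intro x
    simp only [FF, hG]
    rw [mul_div_cancel_left₀ _ hz.ne']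
  have h2 : IntegrableOn (fun x : ℝ => G ⌈x⌉₊) (Set.Ioi 0) := by
    have := (integrableOn_Ioi_comp_mul_left_iff (FF z) 0 hz).mpr (by simpa using FF_integrable hz him)
    simpa only [h1] using this
  have h3 := hasSum_step G h2
  have h4 : ∫ x in Set.Ioi (0:ℝ), G ⌈x⌉₊ = (z.re)⁻¹ • ∫ x in Set.Ioi (0:ℝ), FF z x := by
    have := integral_comp_mul_left_Ioi (FF z) 0 hz
    simpa only [h1, mul_zero] using this
  rw [h4] at h3
  have h5 := h3.const_smul z.re
  rw [smul_smul, mul_inv_cancel₀ hz.ne', one_smul] at h5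
  refine h5.congr_fun ?_ |> fun h => h
  intro k
  simp only [hG, Complex.real_smul]
  push_cast
  have : (z.re : ℂ) ≠ 0 := by exact_mod_cast hz.ne'
  have hk : (k + 1 : ℂ) ≠ 0 := by exact_mod_cast Nat.succ_ne_zero k
  field_simp

/-- the constant -/
noncomputable def K0 : ℂ := ∫ x in Set.Ioi (0:ℝ), W (x : ℂ) / (x : ℂ)

lemma ceil_mul_tendsto {t : ℕ → ℝ} (ht : ∀ j, 0 < t j) (ht0 : Tendsto t atTop (𝓝 0)) {x : ℝ}
    (hx : 0 < x) : Tendsto (fun j => (⌈x / t j⌉₊ : ℝ) * t j) atTop (𝓝 x) := by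
  have h1 : Tendsto (fun j => x + t j) atTop (𝓝 x) := by simpa using ht0.const_add x
  refine tendsto_of_tendsto_of_tendsto_of_le_of_le tendsto_const_nhds h1 (fun j => ?_) (fun j => ?_)
  · show x ≤ _
    rw [← div_le_iff₀ (ht j)]; exact Nat.le_ceil _
  · have := Nat.ceil_lt_add_one (div_nonneg hx.le (ht j).le)
    have h2 := mul_le_mul_of_nonneg_right this.le (ht j).le
    rw [add_mul, div_mul_cancel₀ _ (ht j).ne', one_mul] at h2
    exact h2

lemma tendsto_WW {z : ℕ → ℂ} (hz : ∀ j, 0 < (z j).re) (him : ∀ j, |(z j).im| ≤ (z j).re)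
    (h0 : Tendsto (fun j => (z j).re) atTop (𝓝 0))
    (h1 : Tendsto (fun j => z j / ((z j).re : ℂ)) atTop (𝓝 1)) :
    Tendsto (fun j => ∑' k : ℕ, W ((k + 1 : ℂ) * z j) / (k + 1 : ℂ)) atTop (𝓝 K0) := by
  have e : ∀ j, ∑' k : ℕ, W ((k + 1 : ℂ) * z j) / (k + 1 : ℂ) = ∫ x in Set.Ioi (0:ℝ), FF (z j) x :=
    fun j => (hasSum_W (hz j) (him j)).tsum_eq
  simp only [e]
  refine tendsto_integral_of_dominated_convergence DD
    (fun j => (FF_meas _).aestronglyMeasurable) DD_integrable ?_ ?_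
  · intro j
    filter_upwards [ae_restrict_mem measurableSet_Ioi] with x hx
    exact FF_bound (hz j) (him j) hx
  · filter_upwards [ae_restrict_mem measurableSet_Ioi] with x hx
    have hx' : (0:ℝ) < x := hx
    have c := ceil_mul_tendsto hz h0 hx'
    have c' : Tendsto (fun j => (((⌈x / (z j).re⌉₊ : ℝ) * (z j).re : ℝ) : ℂ)) atTop (𝓝 (x:ℂ)) :=
      (Complex.continuous_ofReal.tendsto x).comp c
    have d : Tendsto (fun j => (⌈x / (z j).re⌉₊ : ℂ) * z j) atTop (𝓝 (x:ℂ)) := by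
      have := c'.mul h1
      rw [mul_one] at this
      refine this.congr (fun j => ?_)
      have : ((z j).re : ℂ) ≠ 0 := by exact_mod_cast (hz j).ne'
      push_cast
      field_simp
    unfold FF
    refine Tendsto.div ?_ c' (by exact_mod_cast hx'.ne')
    exact ((continuousAt_W (u := (x:ℂ)) (by simpa using hx')).tendsto).comp d

end SqPart

open Filter Topology
namespace SqPart
open MeasureTheory

/-- leading constant -/
noncomputable def CC : ℝ := Real.sqrt Real.pi / 2 * zetaThreeHalves

lemma summable_zeta : Summable (fun m : ℕ => ((m + 1 : ℝ)) ^ (-(3 / 2 : ℝ))) := by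
  have h := (Real.summable_nat_rpow (p := -(3 / 2))).mpr (by norm_num)
  have := (summable_nat_add_iff 1).mpr h
  simpa using this

lemma zeta_pos : 0 < zetaThreeHalves := by
  refine summable_zeta.tsum_pos (fun i => by positivity) 0 (by positivity)

lemma CC_pos : 0 < CC := by
  have := zeta_pos
  have := Real.pi_pos
  unfold CC; positivity

lemma hasSum_lead {z : ℂ} (hz : 0 < z.re) :
    HasSum (fun k : ℕ => (((Real.sqrt Real.pi : ℝ) : ℂ) * ((k + 1 : ℂ) * z) ^ (-(1 / 2) : ℂ)) / (k + 1 : ℂ))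
      (2 * CC * z ^ (-(1 / 2) : ℂ)) := by
  have hz0 : z ≠ 0 := by rintro rfl; simp at hz
  have h := (Complex.hasSum_ofReal.mpr summable_zeta.hasSum).mul_left
    (((Real.sqrt Real.pi : ℝ) : ℂ) * z ^ (-(1 / 2) : ℂ))
  have e : ((Real.sqrt Real.pi : ℝ) : ℂ) * z ^ (-(1 / 2) : ℂ) *
      ((∑' m : ℕ, ((m + 1 : ℝ)) ^ (-(3 / 2 : ℝ)) : ℝ) : ℂ) = 2 * CC * z ^ (-(1 / 2) : ℂ) := by
    show ((Real.sqrt Real.pi : ℝ) : ℂ) * z ^ (-(1 / 2) : ℂ) * ((zetaThreeHalves : ℝ) : ℂ) = _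
    unfold CC; push_cast; ring
  rw [e] at h
  refine h.congr_fun ?_
  intro k
  have hk : (0:ℝ) < k + 1 := by positivity
  have e1 : (k + 1 : ℂ) = ((k + 1 : ℝ) : ℂ) := by push_cast; rfl
  have e2 : ((-(1 / 2) : ℝ) : ℂ) = (-(1 / 2) : ℂ) := by push_cast; rfl
  rw [e1, cpow_ofReal_mul hk hz0]
  nth_rewrite 1 [← e2]
  rw [← Complex.ofReal_cpow hk.le]
  have e3 : ((k + 1 : ℝ)) ^ (-(3 / 2 : ℝ)) = ((k + 1 : ℝ)) ^ (-(1 / 2 : ℝ)) / (k + 1 : ℝ) := by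
    rw [← Real.rpow_sub_one hk.ne']; norm_num
  rw [e3]
  push_cast
  ring

lemma hasSum_log {z : ℂ} (hz : 0 < z.re) :
    HasSum (fun k : ℕ => Complex.exp (-((k + 1 : ℂ) * z)) / (k + 1 : ℂ))
      (-Complex.log (1 - Complex.exp (-z))) := by
  have hn : ‖Complex.exp (-z)‖ < 1 := by
    rw [Complex.norm_exp, Complex.neg_re]; exact Real.exp_lt_one_iff.mpr (by linarith)
  have h := Complex.hasSum_taylorSeries_neg_log hn
  rw [← hasSum_nat_add_iff' 1] at h
  simp only [Finset.range_one, Finset.sum_singleton, Nat.cast_zero, div_zero, sub_zero] at h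
  refine h.congr_fun ?_
  intro k
  rw [exp_pow_eq]; push_cast; rfl

lemma GG_formula {z : ℂ} (hz : 0 < z.re) (him : |z.im| ≤ z.re) :
    GG z = CC * z ^ (-(1 / 2) : ℂ) + Complex.log (1 - Complex.exp (-z)) / 2 -
      (∑' k : ℕ, W ((k + 1 : ℂ) * z) / (k + 1 : ℂ)) / 2 := by
  have h3 := (hasSum_W hz him).summable.hasSum
  have h := (((hasSum_lead hz).sub (hasSum_log hz)).sub h3).div_const 2
  have e : (fun k : ℕ => (((Real.sqrt Real.pi : ℝ) : ℂ) * ((k + 1 : ℂ) * z) ^ (-(1 / 2) : ℂ) / (k + 1 : ℂ)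
      - Complex.exp (-((k + 1 : ℂ) * z)) / (k + 1 : ℂ) - W ((k + 1 : ℂ) * z) / (k + 1 : ℂ)) / 2) =
      fun k : ℕ => Psi ((k+1:ℂ)*z)/(k+1:ℂ) := by
    funext k
    unfold W
    ring
  rw [e] at h
  unfold GG
  rw [h.tsum_eq]
  ring

lemma tendsto_one_sub_exp {z : ℕ → ℂ} (h0 : Tendsto z atTop (𝓝 0)) (hz : ∀ j, z j ≠ 0) :
    Tendsto (fun j => (1 - Complex.exp (-(z j))) / z j) atTop (𝓝 1) := by
  rw [tendsto_iff_norm_sub_tendsto_zero]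
  have hn : Tendsto (fun j => ‖z j‖) atTop (𝓝 0) := by simpa using h0.norm
  have hle : ∀ᶠ j in atTop, ‖z j‖ ≤ 1 := hn.eventually_le_const (by norm_num)
  refine squeeze_zero' (Eventually.of_forall fun j => norm_nonneg _) ?_ hn
  filter_upwards [hle] with j hj
  have h := Complex.norm_exp_sub_one_sub_id_le (x := -(z j)) (by simpa using hj)
  have hp : 0 < ‖z j‖ := norm_pos_iff.mpr (hz j)
  have e : (1 - Complex.exp (-(z j))) / z j - 1 = -(Complex.exp (-(z j)) - 1 - -(z j)) / z j := by
    have := hz j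
    field_simp
    ring
  rw [e, norm_div, norm_neg, div_le_iff₀ hp]
  rw [norm_neg] at h
  linarith [sq (‖z j‖)]

lemma tendsto_log_diff {z : ℕ → ℂ} (h0 : Tendsto z atTop (𝓝 0)) (hz : ∀ j, 0 < (z j).re) :
    Tendsto (fun j => Complex.log (1 - Complex.exp (-(z j))) - Complex.log (z j)) atTop (𝓝 0) := by
  have hz0 : ∀ j, z j ≠ 0 := by intro j h; have := hz j; simp [h] at this
  have h1 := tendsto_one_sub_exp h0 hz0
  have h2 : Tendsto (fun j => Complex.log ((1 - Complex.exp (-(z j))) / z j)) atTop (𝓝 0) := by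
    have := (continuousAt_clog (x := 1) (by simp)).tendsto.comp h1
    rw [Complex.log_one] at this
    exact this
  refine h2.congr' ?_
  have h3 : ∀ᶠ j in atTop, 0 < ((1 - Complex.exp (-(z j))) / z j).re :=
    ((Complex.continuous_re.tendsto _).comp h1).eventually_const_lt (by simp)
  filter_upwards [h3] with j hj
  set r := (1 - Complex.exp (-(z j))) / z j with hr
  have hr0 : r ≠ 0 := by intro h; simp [h] at hj
  have e : 1 - Complex.exp (-(z j)) = z j * r := by rw [hr]; field_simp [hz0 j]
  have a1 := Complex.abs_arg_lt_pi_div_two_iff.mpr (Or.inl (hz j))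
  have a2 := Complex.abs_arg_lt_pi_div_two_iff.mpr (Or.inl hj)
  rw [abs_lt] at a1 a2
  rw [e, Complex.log_mul]
  · ring
  · exact hz0 j
  · exact hr0
  · constructor <;> linarith [a1.1, a1.2, a2.1, a2.2]

lemma tendsto_GG {z : ℕ → ℂ} (hz : ∀ j, 0 < (z j).re) (him : ∀ j, |(z j).im| ≤ (z j).re)
    (h0 : Tendsto (fun j => (z j).re) atTop (𝓝 0))
    (h1 : Tendsto (fun j => z j / ((z j).re : ℂ)) atTop (𝓝 1)) :
    Tendsto (fun j => GG (z j) - CC * (z j) ^ (-(1 / 2) : ℂ) - Complex.log (z j) / 2) atTop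
      (𝓝 (-K0 / 2)) := by
  have hz' : Tendsto z atTop (𝓝 0) := by
    have := h1.mul ((Complex.continuous_ofReal.tendsto 0).comp h0)
    rw [Complex.ofReal_zero, mul_zero] at this
    refine this.congr (fun j => ?_)
    have : ((z j).re : ℂ) ≠ 0 := by exact_mod_cast (hz j).ne'
    simp only [Function.comp]
    field_simp
  have h2 := (tendsto_log_diff hz' hz).div_const 2
  have h3 := (tendsto_WW hz him h0 h1).div_const 2
  have h4 := h2.sub h3
  have e : (0 / 2 - K0 / 2 : ℂ) = -K0 / 2 := by ring
  rw [e] at h4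
  refine h4.congr (fun j => ?_)
  rw [GG_formula (hz j) (him j)]
  ring

end SqPart

open Filter Topology
namespace SqPart
open MeasureTheory

noncomputable def psiR (v : ℝ) : ℝ := ∑' m : ℕ, Real.exp (-((m + 1 : ℝ) ^ 2 * v))

lemma Psi_ofReal (v : ℝ) : Psi (v : ℂ) = (psiR v : ℂ) := by
  unfold Psi psiR
  rw [Complex.ofReal_tsum]
  refine tsum_congr fun m => ?_
  push_cast; rfl

noncomputable def wr (v : ℝ) : ℝ :=
  Real.sqrt Real.pi * v ^ (-(1 / 2) : ℝ) - 2 * psiR v - Real.exp (-v)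

lemma W_ofReal {v : ℝ} (hv : 0 < v) : W (v : ℂ) = (wr v : ℂ) := by
  unfold W wr
  have e2 : ((-(1 / 2) : ℝ) : ℂ) = (-(1 / 2) : ℂ) := by push_cast; rfl
  rw [Psi_ofReal, ← e2, ← Complex.ofReal_cpow hv.le]
  push_cast; rfl

lemma wr_bound {v : ℝ} (hv : 0 < v) : |wr v / v| ≤ DD v := by
  have h := W_div_bound (u := (v : ℂ)) (by simpa using hv) (by simpa using hv.le)
  rw [W_ofReal hv, Complex.ofReal_re, ← Complex.ofReal_div, Complex.norm_real] at h
  exact h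

lemma wr_cont : ContinuousOn wr (Set.Ioi 0) := by
  have h : ContinuousOn (fun v : ℝ => (W (v : ℂ)).re) (Set.Ioi 0) := by
    intro v hv
    apply ContinuousAt.continuousWithinAt
    exact Complex.continuous_re.continuousAt.comp
      (ContinuousAt.comp (f := fun v : ℝ => (v : ℂ)) (g := W) (continuousAt_W (by simpa using hv))
        Complex.continuous_ofReal.continuousAt)
  refine h.congr ?_
  intro v hv
  simp only [W_ofReal hv, Complex.ofReal_re]

lemma wrdiv_meas : AEStronglyMeasurable (fun v => wr v / v) (volume.restrict (Set.Ioi 0)) := by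
  apply ContinuousOn.aestronglyMeasurable _ measurableSet_Ioi
  exact wr_cont.div continuousOn_id (fun v hv => (ne_of_gt hv))

noncomputable def k0 : ℝ := ∫ v in Set.Ioi (0:ℝ), wr v / v

lemma K0_eq : K0 = (k0 : ℂ) := by
  unfold K0 k0
  rw [← integral_complex_ofReal]
  apply setIntegral_congr_fun measurableSet_Ioi
  intro v hv
  simp only [W_ofReal hv]
  push_cast; rfl

lemma I3_bound {a v : ℝ} (hv : 0 < v) :
    ‖(1 - Real.exp (-(a ^ 2 * v))) * (wr v / v)‖ ≤ DD v := by
  rw [norm_mul]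
  have h1 : Real.exp (-(a ^ 2 * v)) ≤ 1 := Real.exp_le_one_iff.mpr (by nlinarith [sq_nonneg a])
  have h2 := Real.exp_pos (-(a ^ 2 * v))
  have h3 : ‖1 - Real.exp (-(a ^ 2 * v))‖ ≤ 1 := by
    rw [Real.norm_eq_abs, abs_le]; constructor <;> linarith
  have h4 := wr_bound hv
  calc _ ≤ 1 * DD v := by
        apply mul_le_mul h3 h4 (abs_nonneg _) (by norm_num)
    _ = _ := one_mul _

lemma I3_meas (a : ℝ) : AEStronglyMeasurable (fun v => (1 - Real.exp (-(a ^ 2 * v))) * (wr v / v))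
    (volume.restrict (Set.Ioi 0)) := by
  refine AEStronglyMeasurable.mul ?_ wrdiv_meas
  exact (by fun_prop : Continuous (fun v => (1 - Real.exp (-(a ^ 2 * v))))).aestronglyMeasurable

lemma I3_integrable (a : ℝ) :
    IntegrableOn (fun v => (1 - Real.exp (-(a ^ 2 * v))) * (wr v / v)) (Set.Ioi 0) := by
  refine DD_integrable.mono' (I3_meas a) ?_
  filter_upwards [ae_restrict_mem measurableSet_Ioi] with x hx
  exact I3_bound hx

lemma I3_tendsto : Tendsto (fun j : ℕ => ∫ v in Set.Ioi (0:ℝ),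
    (1 - Real.exp (-((j + 1 : ℝ) ^ 2 * v))) * (wr v / v)) atTop (𝓝 k0) := by
  refine tendsto_integral_of_dominated_convergence DD
    (fun j => I3_meas _) DD_integrable ?_ ?_
  · intro j
    filter_upwards [ae_restrict_mem measurableSet_Ioi] with x hx
    exact I3_bound hx
  · filter_upwards [ae_restrict_mem measurableSet_Ioi] with x hx
    have hx' : (0:ℝ) < x := hx
    have h1 : Tendsto (fun j : ℕ => ((j + 1 : ℝ) ^ 2 * x)) atTop atTop := by
      apply Tendsto.atTop_mul_const hx'
      apply (tendsto_pow_atTop (by norm_num)).comp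
      exact tendsto_atTop_add_const_right _ _ tendsto_natCast_atTop_atTop
    have h2 := Real.tendsto_exp_neg_atTop_nhds_zero.comp h1
    have h3 := (h2.const_sub 1).mul_const (wr x / x)
    simpa using h3

noncomputable def fR (a : ℝ) (m : ℕ) (v : ℝ) : ℝ :=
  v⁻¹ * (Real.exp (-((m + 1 : ℝ) ^ 2 * v)) - Real.exp (-(((m + 1 : ℝ) ^ 2 + a ^ 2) * v)))

lemma fR_eq (a : ℝ) (m : ℕ) (v : ℝ) : fR a m v =
    (1 - Real.exp (-(a ^ 2 * v))) * v⁻¹ * Real.exp (-((m + 1 : ℝ) ^ 2 * v)) := by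
  unfold fR
  have : -(((m + 1 : ℝ) ^ 2 + a ^ 2) * v) = -((m + 1 : ℝ) ^ 2 * v) + -(a ^ 2 * v) := by ring
  rw [this, Real.exp_add]; ring

lemma fR_nonneg {a : ℝ} (m : ℕ) {v : ℝ} (hv : 0 < v) : 0 ≤ fR a m v := by
  rw [fR_eq]
  have h1 : Real.exp (-(a ^ 2 * v)) ≤ 1 := Real.exp_le_one_iff.mpr (by nlinarith [sq_nonneg a])
  have : 0 ≤ 1 - Real.exp (-(a ^ 2 * v)) := by linarith
  positivity

lemma fR_le {a : ℝ} (m : ℕ) {v : ℝ} (hv : 0 < v) :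
    fR a m v ≤ a ^ 2 * Real.exp (-((m + 1 : ℝ) ^ 2 * v)) := by
  rw [fR_eq]
  apply mul_le_mul_of_nonneg_right _ (Real.exp_pos _).le
  rw [← div_eq_mul_inv, div_le_iff₀ hv]
  linarith [Real.add_one_le_exp (-(a ^ 2 * v))]

lemma fR_integrable (a : ℝ) (m : ℕ) : IntegrableOn (fR a m) (Set.Ioi 0) := by
  have h : IntegrableOn (fun v : ℝ => a ^ 2 * Real.exp (-((m + 1 : ℝ) ^ 2 * v))) (Set.Ioi 0) := by
    have := (exp_neg_integrableOn_Ioi 0 (b := (m + 1 : ℝ) ^ 2) (by positivity)).const_mul (a ^ 2)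
    simp only [neg_mul] at this
    exact this
  refine h.mono' ?_ ?_
  · apply ContinuousOn.aestronglyMeasurable _ measurableSet_Ioi
    unfold fR
    refine ContinuousOn.mul (continuousOn_inv₀.mono fun v hv => ne_of_gt hv) ?_
    exact (by fun_prop : Continuous _).continuousOn
  · filter_upwards [ae_restrict_mem measurableSet_Ioi] with v hv
    rw [Real.norm_eq_abs, abs_of_nonneg (fR_nonneg m hv)]
    exact fR_le m hv

lemma fR_integral (a : ℝ) (m : ℕ) :
    ∫ v in Set.Ioi (0:ℝ), fR a m v = Real.log (1 + a ^ 2 / (m + 1 : ℝ) ^ 2) := by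
  have h := Frullani.integral_Ioi_eq (f := fun x : ℝ => Real.exp (-x)) (a := (m + 1 : ℝ) ^ 2)
    (b := (m + 1 : ℝ) ^ 2 + a ^ 2) (L := 1) (R := 0)
    ((Continuous.locallyIntegrable (by fun_prop : Continuous (fun x : ℝ => Real.exp (-x)))).locallyIntegrableOn _) (by positivity) (by positivity)
    (by
      have : Continuous (fun x : ℝ => Real.exp (-x)) := by fun_prop
      have := this.tendsto 0
      simp only [neg_zero, Real.exp_zero] at this
      exact this.mono_left nhdsWithin_le_nhds)
    Real.tendsto_exp_neg_atTop_nhds_zero (fR_integrable a m)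
  simp only [sub_zero, smul_eq_mul, mul_one] at h
  have e : ((m + 1 : ℝ) ^ 2 + a ^ 2) / (m + 1 : ℝ) ^ 2 = 1 + a ^ 2 / (m + 1 : ℝ) ^ 2 := by
    field_simp
  rw [e] at h
  exact h

lemma summable_logs (a : ℝ) : Summable (fun m : ℕ => Real.log (1 + a ^ 2 / (m + 1 : ℝ) ^ 2)) := by
  have h : Summable (fun m : ℕ => a ^ 2 * (1 / (m + 1 : ℝ) ^ 2)) := by
    apply Summable.mul_left
    have := (summable_nat_add_iff 1).mpr (Real.summable_one_div_nat_pow (p := 2) |>.mpr (by norm_num))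
    simpa using this
  refine Summable.of_nonneg_of_le (fun m => Real.log_nonneg ?_) (fun m => ?_) h
  · have : 0 ≤ a ^ 2 / (m + 1 : ℝ) ^ 2 := by positivity
    linarith
  · have : 0 ≤ a ^ 2 / (m + 1 : ℝ) ^ 2 := by positivity
    have := Real.log_le_sub_one_of_pos (by linarith : 0 < 1 + a ^ 2 / (m + 1 : ℝ) ^ 2)
    rw [mul_one_div]; linarith

noncomputable def RR (a : ℝ) : ℝ := ∑' m : ℕ, Real.log (1 + a ^ 2 / (m + 1 : ℝ) ^ 2)

lemma RR_integral (a : ℝ) : RR a = ∫ v in Set.Ioi (0:ℝ), (1 - Real.exp (-(a ^ 2 * v))) * v⁻¹ * psiR v := by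
  have hn : ∀ m : ℕ, ∫ v in Set.Ioi (0:ℝ), ‖fR a m v‖ = Real.log (1 + a ^ 2 / (m + 1 : ℝ) ^ 2) := by
    intro m
    rw [← fR_integral]
    apply setIntegral_congr_fun measurableSet_Ioi
    intro v hv
    simp only [Real.norm_eq_abs, abs_of_nonneg (fR_nonneg m hv)]
  have h := hasSum_integral_of_summable_integral_norm (fun m => fR_integrable a m) (by
    simp only [hn]; exact summable_logs a)
  have h2 := h.tsum_eq
  simp only [fR_integral] at h2
  unfold RR
  rw [h2]
  congr 1
  funext v
  simp only [fR_eq]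
  rw [tsum_mul_left]; rfl

noncomputable def gg (v : ℝ) : ℝ := (1 - Real.exp (-v)) * v ^ (-(3 / 2) : ℝ)

lemma gg_integrable : IntegrableOn gg (Set.Ioi 0) := by
  have hc : ContinuousOn gg (Set.Ioi 0) := by
    unfold gg
    refine ContinuousOn.mul (by fun_prop) ?_
    intro v hv
    exact (Real.continuousAt_rpow_const _ _ (Or.inl (ne_of_gt hv))).continuousWithinAt
  have hm := hc.aestronglyMeasurable (μ := volume) measurableSet_Ioi
  rw [← Set.Ioc_union_Ioi_eq_Ioi (zero_le_one : (0:ℝ) ≤ 1)]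
  apply IntegrableOn.union
  · have h1 : IntegrableOn (fun v : ℝ => v ^ (-(1 / 2) : ℝ)) (Set.Ioc 0 1) := by
      have := intervalIntegral.intervalIntegrable_rpow' (a := 0) (b := 1) (r := -(1 / 2)) (by norm_num)
      rwa [intervalIntegrable_iff_integrableOn_Ioc_of_le zero_le_one] at this
    refine h1.mono' (hm.mono_set Set.Ioc_subset_Ioi_self) ?_
    filter_upwards [ae_restrict_mem measurableSet_Ioc] with v hv
    have hv0 : 0 < v := hv.1
    have e1 : 0 ≤ 1 - Real.exp (-v) := by
      linarith [Real.exp_le_one_iff.mpr (by linarith : -v ≤ 0)]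
    have e2 : 1 - Real.exp (-v) ≤ v := by linarith [Real.add_one_le_exp (-v)]
    have e3 : v ^ (-(1 / 2) : ℝ) = v * v ^ (-(3 / 2) : ℝ) := by
      nth_rewrite 2 [← Real.rpow_one v]
      rw [← Real.rpow_add hv0]; norm_num
    rw [Real.norm_eq_abs, abs_of_nonneg (by unfold gg; positivity), e3]
    unfold gg
    gcongr
  · have h1 : IntegrableOn (fun v : ℝ => v ^ (-(3 / 2) : ℝ)) (Set.Ioi 1) :=
      integrableOn_Ioi_rpow_of_lt (by norm_num) (by norm_num)
    refine h1.mono' (hm.mono_set (Set.Ioi_subset_Ioi zero_le_one)) ?_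
    filter_upwards [ae_restrict_mem measurableSet_Ioi] with v hv
    have hv0 : 0 < v := lt_trans one_pos hv
    have e1 : 0 ≤ 1 - Real.exp (-v) := by
      linarith [Real.exp_le_one_iff.mpr (by linarith : -v ≤ 0)]
    have e2 : 1 - Real.exp (-v) ≤ 1 := by linarith [Real.exp_pos (-v)]
    rw [Real.norm_eq_abs, abs_of_nonneg (by unfold gg; positivity)]
    unfold gg
    have : 0 < v ^ (-(3 / 2) : ℝ) := by positivity
    nlinarith

noncomputable def c1 : ℝ := ∫ v in Set.Ioi (0:ℝ), gg v

lemma gg_scale {a : ℝ} (ha : 0 < a) {v : ℝ} (hv : 0 < v) :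
    (1 - Real.exp (-(a ^ 2 * v))) * v ^ (-(3 / 2) : ℝ) = a ^ 3 * gg (a ^ 2 * v) := by
  unfold gg
  rw [Real.mul_rpow (by positivity) hv.le]
  have : (a ^ 2) ^ (-(3 / 2) : ℝ) = (a ^ 3)⁻¹ := by
    rw [← Real.rpow_natCast, ← Real.rpow_mul ha.le, ← Real.rpow_natCast, ← Real.rpow_neg ha.le]
    norm_num
  rw [this]
  field_simp

lemma RR_split {a : ℝ} (ha : 0 < a) : 2 * RR a = Real.sqrt Real.pi * c1 * a - Real.log (1 + a ^ 2) -
    ∫ v in Set.Ioi (0:ℝ), (1 - Real.exp (-(a ^ 2 * v))) * (wr v / v) := by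
  have ha2 : 0 < a ^ 2 := by positivity
  have i1 : IntegrableOn (fun v => gg (a ^ 2 * v)) (Set.Ioi 0) :=
    (integrableOn_Ioi_comp_mul_left_iff gg 0 ha2).mpr (by simpa using gg_integrable)
  have i1' := i1.const_mul (Real.sqrt Real.pi * a ^ 3)
  have e1 : ∫ v in Set.Ioi (0:ℝ), Real.sqrt Real.pi * a ^ 3 * gg (a ^ 2 * v) =
      Real.sqrt Real.pi * c1 * a := by
    rw [integral_const_mul, integral_comp_mul_left_Ioi gg 0 ha2, mul_zero, smul_eq_mul]
    show _ * (_ * c1) = _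
    field_simp
  have i2 := fR_integrable a 0
  have e2 := fR_integral a 0
  have i3 := I3_integrable a
  rw [RR_integral, ← integral_const_mul]
  have h0 : Real.log (1 + a ^ 2) = Real.log (1 + a ^ 2 / (((0:ℕ) : ℝ) + 1) ^ 2) := by norm_num
  rw [h0, ← e2, ← e1, ← integral_sub i1' i2]
  have i12 : IntegrableOn (fun v => Real.sqrt Real.pi * a ^ 3 * gg (a ^ 2 * v) - fR a 0 v)
    (Set.Ioi 0) := i1'.sub i2
  rw [← integral_sub i12 i3]
  apply setIntegral_congr_fun measurableSet_Ioi
  intro v hv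
  have hv' : (0:ℝ) < v := hv
  simp only []
  rw [mul_assoc (Real.sqrt Real.pi), ← gg_scale ha hv', fR_eq]
  unfold wr
  have e3 : v ^ (-(3 / 2) : ℝ) = v ^ (-(1 / 2) : ℝ) / v := by
    rw [← Real.rpow_sub_one hv'.ne']; norm_num
  rw [e3]
  norm_num
  field_simp
  ring

end SqPart

open Filter Topology
namespace SqPart
open MeasureTheory

lemma RR_sinh {a : ℝ} (ha : 0 < a) : Real.pi * a * Real.exp (RR a) = Real.sinh (Real.pi * a) := by
  have h := Complex.tendsto_euler_sin_prod (a * Complex.I)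
  have e1 : Complex.sin (Real.pi * (a * Complex.I)) = ((Real.sinh (Real.pi * a) : ℝ) : ℂ) * Complex.I := by
    rw [← mul_assoc, Complex.sin_mul_I]; push_cast; rfl
  have e2 : ∀ n : ℕ, (Real.pi * (a * Complex.I) * ∏ j ∈ Finset.range n,
      ((1 : ℂ) - (a * Complex.I) ^ 2 / ((j : ℂ) + 1) ^ 2)) =
      ((Real.pi * a * Real.exp (∑ j ∈ Finset.range n, Real.log (1 + a ^ 2 / (j + 1 : ℝ) ^ 2)) : ℝ) : ℂ)
        * Complex.I := by
    intro n
    rw [Real.exp_sum]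
    push_cast
    have : ∀ j ∈ Finset.range n, ((1 : ℂ) - (a * Complex.I) ^ 2 / ((j : ℂ) + 1) ^ 2) =
        Complex.exp ((Real.log (1 + a ^ 2 / (j + 1 : ℝ) ^ 2) : ℝ) : ℂ) := by
      intro j _
      rw [← Complex.ofReal_exp, Real.exp_log (by positivity), mul_pow, Complex.I_sq]
      push_cast; ring
    rw [Finset.prod_congr rfl this]
    push_cast
    ring
  simp only [e1, e2] at h
  have h2 := (h.mul_const (-Complex.I))
  have h3 := (Complex.continuous_re.tendsto _).comp h2
  have hc : ∀ r : ℝ, ((r : ℂ) * Complex.I * (-Complex.I)).re = r := by intro r; simp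
  simp only [Function.comp_def, hc] at h3
  have h4 : Tendsto (fun n : ℕ => Real.pi * a * Real.exp (∑ j ∈ Finset.range n,
      Real.log (1 + a ^ 2 / (j + 1 : ℝ) ^ 2))) atTop (𝓝 (Real.pi * a * Real.exp (RR a))) :=
    ((Real.continuous_exp.tendsto _).comp (summable_logs a).hasSum.tendsto_sum_nat).const_mul _
  exact tendsto_nhds_unique h4 h3

lemma RR_eq {a : ℝ} (ha : 0 < a) : RR a = Real.pi * a + Real.log (1 - Real.exp (-(2 * Real.pi * a)))
    - Real.log (2 * Real.pi) - Real.log a := by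
  have hp := Real.pi_pos
  have h := RR_sinh ha
  have hlt : Real.exp (-(2 * Real.pi * a)) < 1 := Real.exp_lt_one_iff.mpr (by
    have : 0 < 2 * Real.pi * a := by positivity
    linarith)
  have e : Real.exp (RR a) = Real.exp (Real.pi * a) * (1 - Real.exp (-(2 * Real.pi * a))) /
      (2 * Real.pi * a) := by
    rw [Real.sinh_eq] at h
    have : Real.exp (-(2 * Real.pi * a)) * Real.exp (Real.pi * a) = Real.exp (-(Real.pi * a)) := by
      rw [← Real.exp_add]; ring_nf
    rw [eq_div_iff (by positivity)]
    linear_combination 2 * h + this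
  have e' := congrArg Real.log e
  have hne : (1 - Real.exp (-(2 * Real.pi * a))) ≠ 0 := by linarith
  rw [Real.log_exp, Real.log_div (mul_ne_zero (Real.exp_pos _).ne' hne) (by positivity),
    Real.log_mul (Real.exp_pos _).ne' hne, Real.log_exp, Real.log_mul (by positivity) ha.ne'] at e'
  rw [e']; ring

lemma k0_eq : k0 = 2 * Real.log (2 * Real.pi) := by
  have hp := Real.pi_pos
  set κ := 2 * Real.pi - Real.sqrt Real.pi * c1 with hκ
  have ha : Tendsto (fun j : ℕ => (j + 1 : ℝ)) atTop atTop :=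
    tendsto_atTop_add_const_right _ _ tendsto_natCast_atTop_atTop
  have l1 : Tendsto (fun j : ℕ => Real.log (1 - Real.exp (-(2 * Real.pi * (j + 1 : ℝ))))) atTop (𝓝 0) := by
    have h1 : Tendsto (fun j : ℕ => 2 * Real.pi * (j + 1 : ℝ)) atTop atTop :=
      ha.const_mul_atTop (by positivity)
    have h2 := (Real.tendsto_exp_neg_atTop_nhds_zero.comp h1).const_sub 1
    rw [sub_zero] at h2
    have h3 := (Real.continuousAt_log (one_ne_zero)).tendsto.comp h2
    rw [Real.log_one] at h3
    exact h3
  have l2 : Tendsto (fun j : ℕ => Real.log (1 + (j + 1 : ℝ) ^ 2) - 2 * Real.log (j + 1 : ℝ)) atTop (𝓝 0) := by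
    have h1 : Tendsto (fun j : ℕ => ((j + 1 : ℝ) ^ 2)⁻¹ + 1) atTop (𝓝 1) := by
      have := ((tendsto_inv_atTop_zero.comp ((tendsto_pow_atTop (n := 2) (by norm_num)).comp ha))).add_const 1
      rw [zero_add] at this
      exact this
    have h3 := (Real.continuousAt_log (one_ne_zero)).tendsto.comp h1
    rw [Real.log_one] at h3
    refine h3.congr (fun j => ?_)
    have hj : (0:ℝ) < (j + 1 : ℝ) := by positivity
    have e : ((j + 1 : ℝ) ^ 2)⁻¹ + 1 = (1 + (j + 1 : ℝ) ^ 2) / (j + 1 : ℝ) ^ 2 := by field_simp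
    simp only [Function.comp]
    rw [e, Real.log_div (by positivity) (by positivity), Real.log_pow]
    push_cast; ring
  have l3 : Tendsto (fun j : ℕ => κ * (j + 1 : ℝ)) atTop (𝓝 (2 * Real.log (2 * Real.pi) - k0)) := by
    have := (((I3_tendsto.const_sub (2 * Real.log (2 * Real.pi)))).sub l2).sub (l1.const_mul 2)
    simp only [mul_zero, sub_zero] at this
    refine this.congr (fun j => ?_)
    have hj : (0:ℝ) < (j + 1 : ℝ) := by positivity
    have h1 := RR_split hj
    rw [RR_eq hj] at h1
    rw [hκ]
    linear_combination -h1
  have hk : κ = 0 := by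
    have h1 := l3.mul (tendsto_inv_atTop_zero.comp ha)
    rw [mul_zero] at h1
    refine tendsto_nhds_unique (tendsto_const_nhds.congr (fun j => ?_)) h1
    have hj : (0:ℝ) < (j + 1 : ℝ) := by positivity
    simp only [Function.comp]
    field_simp
  rw [hk] at l3
  simp only [zero_mul] at l3
  have := tendsto_nhds_unique l3 tendsto_const_nhds
  linarith

/-- Asymptotics of `GG` near zero. -/
lemma tendsto_GG_log {z : ℕ → ℂ} (hz : ∀ j, 0 < (z j).re) (him : ∀ j, |(z j).im| ≤ (z j).re)
    (h0 : Tendsto (fun j => (z j).re) atTop (𝓝 0))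
    (h1 : Tendsto (fun j => z j / ((z j).re : ℂ)) atTop (𝓝 1)) :
    Tendsto (fun j => GG (z j) - CC * (z j) ^ (-(1 / 2) : ℂ) - Complex.log (z j) / 2) atTop
      (𝓝 (-((Real.log (2 * Real.pi) : ℝ) : ℂ))) := by
  have := tendsto_GG hz him h0 h1
  rw [K0_eq, k0_eq] at this
  convert! this using 2
  push_cast; ring

end SqPart

open Filter Topology
namespace SqPart
open MeasureTheory

lemma q_identity {x q : ℂ} (h : q ^ 2 * (1 + x) = 1) (hq : q + 1 ≠ 0) :
    q - 1 + x / 2 = x ^ 2 * (((q + 1) - 1 / ((1 + x) * (q + 1))) / (2 * (1 + x) * (q + 1))) := by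
  have hx : 1 + x ≠ 0 := by intro h0; rw [h0] at h; simp at h
  have hxe : x = 1 / q ^ 2 - 1 := by
    have hq0 : q ≠ 0 := by rintro rfl; simp at h
    field_simp
    linear_combination h
  have hq0 : q ≠ 0 := by rintro rfl; simp at h
  have h1 : 1 + x = 1 / q ^ 2 := by rw [hxe]; ring
  rw [h1, hxe]
  field_simp
  ring

lemma q_sq {x : ℂ} (hx : 1 + x ≠ 0) : ((1 + x) ^ (-(1 / 2) : ℂ)) ^ 2 * (1 + x) = 1 := by
  rw [← Complex.cpow_nat_mul]
  have : (((2:ℕ) : ℂ) * (-(1 / 2) : ℂ)) = -1 := by push_cast; ring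
  rw [this, Complex.cpow_neg_one, inv_mul_cancel₀ hx]

lemma tendsto_Q {x : ℕ → ℂ} (hx : Tendsto x atTop (𝓝 0)) :
    Tendsto (fun j => (((1 + x j) ^ (-(1 / 2) : ℂ) + 1) -
      1 / ((1 + x j) * ((1 + x j) ^ (-(1 / 2) : ℂ) + 1))) /
        (2 * (1 + x j) * ((1 + x j) ^ (-(1 / 2) : ℂ) + 1))) atTop (𝓝 (3 / 8)) := by
  have h1 : Tendsto (fun j => 1 + x j) atTop (𝓝 1) := by simpa using hx.const_add 1
  have h2 : Tendsto (fun j => (1 + x j) ^ (-(1 / 2) : ℂ)) atTop (𝓝 1) := by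
    have := h1.cpow (tendsto_const_nhds (x := (-(1 / 2) : ℂ))) (by simp)
    rwa [Complex.one_cpow] at this
  have h3 := h2.add_const 1
  have h4 := (h3.sub ((tendsto_const_nhds (x := (1:ℂ))).div (h1.mul h3) (by norm_num))).div
    ((h1.const_mul 2).mul h3) (by norm_num)
  convert! h4 using 2
  norm_num

lemma ofReal_cpow_neg_half {τ : ℝ} (hτ : 0 < τ) :
    ((τ ^ 4 : ℝ) : ℂ) ^ (-(1 / 2) : ℂ) = (((τ ^ 2)⁻¹ : ℝ) : ℂ) := by
  have e2 : ((-(1 / 2) : ℝ) : ℂ) = (-(1 / 2) : ℂ) := by push_cast; rfl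
  rw [← e2, ← Complex.ofReal_cpow (by positivity)]
  congr 1
  rw [← Real.rpow_natCast, ← Real.rpow_mul hτ.le, ← Real.rpow_natCast, ← Real.rpow_neg hτ.le]
  norm_num

lemma GG_real_lim {τ : ℕ → ℝ} (hτ : ∀ j, 0 < τ j) (h0 : Tendsto τ atTop (𝓝 0)) :
    Tendsto (fun j => GG ((τ j ^ 4 : ℝ) : ℂ) - CC * (((τ j ^ 2)⁻¹ : ℝ) : ℂ) -
      ((Real.log (τ j ^ 4) : ℝ) : ℂ) / 2) atTop (𝓝 (-((Real.log (2 * Real.pi) : ℝ) : ℂ))) := by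
  have h := tendsto_GG_log (z := fun j => ((τ j ^ 4 : ℝ) : ℂ))
    (fun j => by rw [Complex.ofReal_re]; have := hτ j; positivity)
    (fun j => by rw [Complex.ofReal_re, Complex.ofReal_im, abs_zero]; have := hτ j; positivity)
    (by simp only [Complex.ofReal_re]; have := h0.pow 4; simpa using this)
    (by
      refine tendsto_const_nhds.congr (fun j => ?_)
      rw [Complex.ofReal_re, div_self]
      have := (pow_pos (hτ j) 4).ne'
      exact_mod_cast this)
  refine h.congr (fun j => ?_)
  rw [ofReal_cpow_neg_half (hτ j), Complex.ofReal_log (pow_pos (hτ j) 4).le]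

lemma pointwise_aux {τ : ℕ → ℝ} (hτ : ∀ j, 0 < τ j) (h0 : Tendsto τ atTop (𝓝 0)) (s : ℝ)
    (hs : ∀ j, |s * τ j| ≤ 1) :
    Tendsto (fun j => GG (((τ j) ^ 4 : ℝ) + ((τ j ^ 5 * s : ℝ) : ℂ) * Complex.I) - GG ((τ j ^ 4 : ℝ) : ℂ)
      + Complex.I * ((CC / 2 * (τ j)⁻¹ * s : ℝ) : ℂ)) atTop (𝓝 (-((3 / 8 * CC * s ^ 2 : ℝ) : ℂ))) := by
  set x : ℕ → ℂ := fun j => ((s * τ j : ℝ) : ℂ) * Complex.I with hx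
  have hx0 : Tendsto x atTop (𝓝 0) := by
    have h1 : Tendsto (fun j => s * τ j) atTop (𝓝 0) := by simpa using h0.const_mul s
    have h2 := ((Complex.continuous_ofReal.tendsto 0).comp h1).mul_const Complex.I
    rw [Complex.ofReal_zero, zero_mul] at h2
    exact h2
  have hzx : ∀ j, (((τ j) ^ 4 : ℝ) + ((τ j ^ 5 * s : ℝ) : ℂ) * Complex.I) =
      ((τ j ^ 4 : ℝ) : ℂ) * (1 + x j) := by
    intro j; simp only [hx]; push_cast; ring
  have hre : ∀ j, (((τ j ^ 4 : ℝ) : ℂ) * (1 + x j)).re = τ j ^ 4 := by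
    intro j; rw [Complex.re_ofReal_mul]; simp [hx]
  have him : ∀ j, (((τ j ^ 4 : ℝ) : ℂ) * (1 + x j)).im = τ j ^ 4 * (s * τ j) := by
    intro j; rw [Complex.im_ofReal_mul]; simp [hx]
  have hx1 : ∀ j, 1 + x j ≠ 0 := by
    intro j h
    have := congrArg Complex.re h
    simp [hx] at this
  have h1 := tendsto_GG_log (z := fun j => ((τ j ^ 4 : ℝ) : ℂ) * (1 + x j))
    (fun j => by rw [hre]; have := hτ j; positivity)
    (fun j => by
      rw [hre, him, abs_mul, abs_of_pos (pow_pos (hτ j) 4)]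
      have := pow_pos (hτ j) 4
      nlinarith [hs j])
    (by simp only [hre]; have := h0.pow 4; simpa using this)
    (by
      have : Tendsto (fun j => 1 + x j) atTop (𝓝 1) := by simpa using hx0.const_add 1
      refine this.congr (fun j => ?_)
      rw [hre]
      have : ((τ j ^ 4 : ℝ) : ℂ) ≠ 0 := by exact_mod_cast (pow_pos (hτ j) 4).ne'
      field_simp)
  have h2 := GG_real_lim hτ h0
  have hlog : Tendsto (fun j => Complex.log (1 + x j) / 2) atTop (𝓝 0) := by
    have h3 : Tendsto (fun j => 1 + x j) atTop (𝓝 1) := by simpa using hx0.const_add 1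
    have := ((continuousAt_clog (x := 1) (by simp)).tendsto.comp h3).div_const 2
    rw [Complex.log_one, zero_div] at this
    exact this
  have hQ := (tendsto_Q hx0).const_mul (-((CC * s ^ 2 : ℝ) : ℂ))
  have hall := ((h1.sub h2).add hlog).add hQ
  have e : (-((Real.log (2 * Real.pi) : ℝ) : ℂ) - -((Real.log (2 * Real.pi) : ℝ) : ℂ) + 0 +
    -((CC * s ^ 2 : ℝ) : ℂ) * (3 / 8)) = -((3 / 8 * CC * s ^ 2 : ℝ) : ℂ) := by push_cast; ring
  rw [e] at hall
  refine hall.congr (fun j => ?_)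
  have hτj := hτ j
  have ht4 := pow_pos hτj 4
  rw [hzx, cpow_ofReal_mul ht4 (hx1 j), Complex.log_ofReal_mul ht4 (hx1 j), ofReal_cpow_neg_half hτj]
  set q := (1 + x j) ^ (-(1 / 2) : ℂ) with hq
  have hq1 : q + 1 ≠ 0 := by
    intro h
    have hqm : q = -1 := by linear_combination h
    have := q_sq (hx1 j)
    rw [← hq, hqm] at this
    have hxj : x j = 0 := by linear_combination this
    rw [hxj, add_zero, Complex.one_cpow] at hq
    rw [hq] at hqm
    norm_num at hqm
  have hid := q_identity (q_sq (hx1 j)) hq1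
  set Q := ((q + 1) - 1 / ((1 + x j) * (q + 1))) / (2 * (1 + x j) * (q + 1)) with hQdef
  have hid' : q - 1 + x j / 2 = x j ^ 2 * Q := hid
  have hτc : (τ j : ℂ) ≠ 0 := by exact_mod_cast hτj.ne'
  have hQ2 : -((CC * s ^ 2 : ℝ) : ℂ) * Q = CC * (((τ j ^ 2)⁻¹ : ℝ) : ℂ) * (q - 1 + x j / 2) := by
    rw [hid']; simp only [hx]; push_cast
    rw [mul_pow, Complex.I_sq]
    field_simp
  rw [hQ2]
  simp only [hx]
  push_cast
  field_simp
  ring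

lemma pointwise {τ : ℕ → ℝ} (hτ : ∀ j, 0 < τ j) (h0 : Tendsto τ atTop (𝓝 0)) (s : ℝ) :
    Tendsto (fun j => GG (((τ j) ^ 4 : ℝ) + ((τ j ^ 5 * s : ℝ) : ℂ) * Complex.I) - GG ((τ j ^ 4 : ℝ) : ℂ)
      + Complex.I * ((CC / 2 * (τ j)⁻¹ * s : ℝ) : ℂ)) atTop (𝓝 (-((3 / 8 * CC * s ^ 2 : ℝ) : ℂ))) := by
  have h1 : Tendsto (fun j => |s * τ j|) atTop (𝓝 0) := by simpa using (h0.const_mul s).abs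
  obtain ⟨N, hN⟩ := eventually_atTop.mp (h1.eventually_le_const (by norm_num : (0:ℝ) < 1))
  rw [← tendsto_add_atTop_iff_nat N]
  exact pointwise_aux (τ := fun j => τ (j + N)) (fun j => hτ _) ((tendsto_add_atTop_iff_nat N).mpr h0) s
    (fun j => hN _ (by omega))

end SqPart

open Filter Topology
namespace SqPart
open MeasureTheory

lemma continuous_expGG {t : ℝ} (ht : 0 < t) :
    Continuous (fun θ : ℝ => Complex.exp (GG (t + θ * Complex.I))) := by
  have e : (fun θ : ℝ => Complex.exp (GG (t + θ * Complex.I))) =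
      fun θ : ℝ => ∑' n : ℕ, (pSq n : ℂ) * Complex.exp (-(t + θ * Complex.I)) ^ n := by
    funext θ
    exact (hasSum_pSq (by simpa using ht)).tsum_eq.symm
  rw [e]
  refine continuous_tsum (fun n => by fun_prop) (summable_pSq ht) (fun n θ => ?_)
  rw [norm_mul, norm_pow, Complex.norm_natCast, Complex.norm_exp]
  simp

/-- normalised integrand -/
noncomputable def HH (N : ℝ) (τ : ℝ) (s : ℝ) : ℂ :=
  (Set.Ioc (-Real.pi / τ ^ 5) (Real.pi / τ ^ 5)).indicator (fun s : ℝ =>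
    Complex.exp (GG ((τ ^ 4 : ℝ) + ((τ ^ 5 * s : ℝ) : ℂ) * Complex.I) - GG ((τ ^ 4 : ℝ) : ℂ)
      + Complex.I * ((N * τ ^ 5 * s : ℝ) : ℂ))) s

lemma HH_meas (N : ℝ) {τ : ℝ} (hτ : 0 < τ) : Measurable (HH N τ) := by
  unfold HH
  apply Measurable.indicator _ measurableSet_Ioc
  apply Continuous.measurable
  have h1 := (continuous_expGG (pow_pos hτ 4)).comp (by fun_prop : Continuous (fun s : ℝ => τ ^ 5 * s))
  have h2 : Continuous (fun s : ℝ => Complex.exp (-GG ((τ ^ 4 : ℝ) : ℂ)) *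
    Complex.exp (Complex.I * ((N * τ ^ 5 * s : ℝ) : ℂ))) := by fun_prop
  refine (h1.mul h2).congr (fun s => ?_)
  simp only [Pi.mul_apply, Function.comp_apply]
  rw [← Complex.exp_add, ← Complex.exp_add]
  congr 1; ring

lemma HH_integral (N : ℕ) {τ : ℝ} (hτ : 0 < τ) :
    ∫ s, HH N τ s = (pSq N : ℂ) * (2 * Real.pi) * Complex.exp (-GG ((τ ^ 4 : ℝ) : ℂ)) *
      ((Real.exp (-(N * τ ^ 4)) : ℝ) : ℂ) * (((τ ^ 5)⁻¹ : ℝ) : ℂ) := by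
  have hp := Real.pi_pos
  have h5 : 0 < τ ^ 5 := by positivity
  unfold HH
  rw [integral_indicator measurableSet_Ioc, ← intervalIntegral.integral_of_le (by
    rw [neg_div]; have : 0 < Real.pi / τ ^ 5 := by positivity
    linarith)]
  have h := intervalIntegral.integral_comp_mul_left (a := -Real.pi / τ ^ 5) (b := Real.pi / τ ^ 5)
    (fun θ : ℝ => Complex.exp (GG ((τ ^ 4 : ℝ) + (θ : ℂ) * Complex.I) - GG ((τ ^ 4 : ℝ) : ℂ)
      + Complex.I * ((N * θ : ℝ) : ℂ))) h5.ne'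
  have e1 : τ ^ 5 * (-Real.pi / τ ^ 5) = -Real.pi := by field_simp
  have e2 : τ ^ 5 * (Real.pi / τ ^ 5) = Real.pi := by field_simp
  rw [e1, e2] at h
  simp only [mul_assoc] at h ⊢
  rw [h]
  have e3 : ∀ θ : ℝ, Complex.exp (GG ((τ ^ 4 : ℝ) + (θ : ℂ) * Complex.I) - GG ((τ ^ 4 : ℝ) : ℂ)
      + Complex.I * ((N * θ : ℝ) : ℂ)) =
      (Complex.exp (-GG ((τ ^ 4 : ℝ) : ℂ)) * ((Real.exp (-(N * τ ^ 4)) : ℝ) : ℂ)) *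
      (Complex.exp (GG ((τ ^ 4 : ℝ) + (θ : ℂ) * Complex.I)) *
        Complex.exp (N * ((τ ^ 4 : ℝ) + θ * Complex.I))) := by
    intro θ
    rw [Complex.ofReal_exp, ← Complex.exp_add, ← Complex.exp_add, ← Complex.exp_add]
    congr 1; push_cast; ring
  simp only [e3]
  rw [intervalIntegral.integral_const_mul, ← cauchy_pSq (pow_pos hτ 4), Complex.real_smul]
  ring

lemma tendsto_main {N : ℕ → ℕ} {τ : ℕ → ℝ} (hτ : ∀ j, 0 < τ j) (h0 : Tendsto τ atTop (𝓝 0))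
    (hN : ∀ j, (N j : ℝ) * τ j ^ 6 = CC / 2) :
    Tendsto (fun j => ∫ s, HH (N j) (τ j) s) atTop
      (𝓝 ((Real.sqrt (Real.pi / (3 / 8 * CC)) : ℝ) : ℂ)) := by
  obtain ⟨K, hK⟩ := domination
  have hp := Real.pi_pos
  have hK0 : 0 ≤ K := le_trans (by positivity) (hK (1 / 2) 0 (by norm_num) (by norm_num) (by simpa using hp.le))
  have hg : ((Real.sqrt (Real.pi / (3 / 8 * CC)) : ℝ) : ℂ) =
      ∫ s : ℝ, Complex.exp (-((3 / 8 * CC * s ^ 2 : ℝ) : ℂ)) := by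
    rw [← integral_gaussian, ← integral_complex_ofReal]
    congr 1
    funext s
    push_cast
    congr 1; ring
  rw [hg]
  refine tendsto_integral_filter_of_dominated_convergence (fun s => K * (1 + s ^ 2)⁻¹)
    (Eventually.of_forall fun j => (HH_meas _ (hτ j)).aestronglyMeasurable) ?_
    (integrable_inv_one_add_sq.const_mul K) ?_
  · filter_upwards [h0.eventually_le_const (by norm_num : (0:ℝ) < 1 / 2)] with j hj
    refine ae_of_all _ (fun s => ?_)
    unfold HH
    have h5 : 0 < τ j ^ 5 := pow_pos (hτ j) 5
    by_cases hs : s ∈ Set.Ioc (-Real.pi / τ j ^ 5) (Real.pi / τ j ^ 5)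
    · rw [Set.indicator_of_mem hs, Complex.norm_exp]
      have habs : |τ j ^ 5 * s| ≤ Real.pi := by
        rw [abs_le]
        have h1 := hs.1
        have h2 := hs.2
        rw [div_lt_iff₀ h5] at h1
        rw [le_div_iff₀ h5] at h2
        constructor <;> linarith
      have h := hK (τ j) (τ j ^ 5 * s) (hτ j) hj habs
      rw [mul_div_cancel_left₀ _ h5.ne'] at h
      rw [← div_eq_mul_inv, le_div_iff₀ (by positivity)]
      refine le_trans (le_of_eq ?_) h
      congr 2
      rw [Complex.add_re, Complex.sub_re, Complex.I_mul_re, Complex.ofReal_im, neg_zero, add_zero]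
    · rw [Set.indicator_of_notMem hs, norm_zero]
      positivity
  · refine ae_of_all _ (fun s => ?_)
    have h1 := (Complex.continuous_exp.tendsto _).comp (pointwise hτ h0 s)
    refine h1.congr' ?_
    have h2 : Tendsto (fun j => |s * τ j ^ 5|) atTop (𝓝 0) := by
      simpa using ((h0.pow 5).const_mul s).abs
    filter_upwards [h2.eventually_lt_const hp] with j hj
    have h5 : 0 < τ j ^ 5 := pow_pos (hτ j) 5
    rw [abs_lt] at hj
    have hs : s ∈ Set.Ioc (-Real.pi / τ j ^ 5) (Real.pi / τ j ^ 5) := by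
      constructor
      · rw [div_lt_iff₀ h5]; linarith [hj.1]
      · rw [le_div_iff₀ h5]; linarith [hj.2]
    unfold HH
    rw [Set.indicator_of_mem hs]
    have e : CC / 2 * (τ j)⁻¹ * s = N j * τ j ^ 5 * s := by
      rw [← hN j]
      have := (hτ j).ne'
      field_simp
    simp only [Function.comp, e]

lemma tendsto_real {N : ℕ → ℕ} {τ : ℕ → ℝ} (hτ : ∀ j, 0 < τ j) (h0 : Tendsto τ atTop (𝓝 0))
    (hN : ∀ j, (N j : ℝ) * τ j ^ 6 = CC / 2) :
    Tendsto (fun j => (pSq (N j) : ℝ) / (τ j ^ 7 * Real.exp (3 / 2 * CC / τ j ^ 2))) atTop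
      (𝓝 (Real.sqrt (Real.pi / (3 / 8 * CC)) / (4 * Real.pi ^ 2))) := by
  have hp := Real.pi_pos
  have h1 := tendsto_main hτ h0 hN
  have h2 := (Complex.continuous_exp.tendsto _).comp (GG_real_lim hτ h0)
  have h3 := (h1.mul h2).div_const (2 * Real.pi : ℂ)
  have h4 := (Complex.continuous_re.tendsto _).comp h3
  have e1 : (((Real.sqrt (Real.pi / (3 / 8 * CC)) : ℝ) : ℂ) *
      Complex.exp (-((Real.log (2 * Real.pi) : ℝ) : ℂ)) / (2 * Real.pi : ℂ)) =
      ((Real.sqrt (Real.pi / (3 / 8 * CC)) / (4 * Real.pi ^ 2) : ℝ) : ℂ) := by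
    rw [← Complex.ofReal_neg, ← Complex.ofReal_exp, Real.exp_neg, Real.exp_log (by positivity)]
    push_cast
    have : (Real.pi : ℂ) ≠ 0 := by exact_mod_cast hp.ne'
    field_simp
    norm_num
  rw [e1, Complex.ofReal_re] at h4
  refine h4.congr (fun j => ?_)
  have hτj := hτ j
  simp only [Function.comp]
  rw [HH_integral _ hτj]
  have e2 : (pSq (N j) : ℂ) * (2 * Real.pi) * Complex.exp (-GG ((τ j ^ 4 : ℝ) : ℂ)) *
      ((Real.exp (-(N j * τ j ^ 4)) : ℝ) : ℂ) * (((τ j ^ 5)⁻¹ : ℝ) : ℂ) *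
      Complex.exp (GG ((τ j ^ 4 : ℝ) : ℂ) - CC * (((τ j ^ 2)⁻¹ : ℝ) : ℂ) -
      ((Real.log (τ j ^ 4) : ℝ) : ℂ) / 2) / (2 * Real.pi : ℂ) =
      (((pSq (N j) : ℝ) / (τ j ^ 7 * Real.exp (3 / 2 * CC / τ j ^ 2)) : ℝ) : ℂ) := by
    have hs : Complex.exp (GG ((τ j ^ 4 : ℝ) : ℂ) - CC * (((τ j ^ 2)⁻¹ : ℝ) : ℂ) -
        ((Real.log (τ j ^ 4) : ℝ) : ℂ) / 2) = Complex.exp (GG ((τ j ^ 4 : ℝ) : ℂ)) *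
        ((Real.exp (-(CC * (τ j ^ 2)⁻¹)) * (τ j ^ 2)⁻¹ : ℝ) : ℂ) := by
      have : (τ j ^ 2)⁻¹ = Real.exp (-(Real.log (τ j ^ 4) / 2)) := by
        rw [Real.log_pow]
        have : -(((4:ℕ) : ℝ) * Real.log (τ j) / 2) = -Real.log (τ j ^ 2) := by
          rw [Real.log_pow]; push_cast; ring
        rw [this, Real.exp_neg, Real.exp_log (by positivity)]
      nth_rewrite 3 [this]
      rw [← Real.exp_add, Complex.ofReal_exp, ← Complex.exp_add]
      congr 1
      push_cast
      ring
    rw [hs, Complex.exp_neg]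
    have hexp : Real.exp (3 / 2 * CC / τ j ^ 2) = (Real.exp (-(N j * τ j ^ 4)))⁻¹ *
        (Real.exp (-(CC * (τ j ^ 2)⁻¹)))⁻¹ := by
      rw [← Real.exp_neg, ← Real.exp_neg, ← Real.exp_add]
      congr 1
      have hNj : (N j : ℝ) * τ j ^ 4 = CC / 2 / τ j ^ 2 := by
        rw [← hN j]; field_simp
      rw [neg_neg, neg_neg, hNj]
      field_simp
      ring
    rw [hexp]
    have g1 := Complex.exp_ne_zero (GG ((τ j ^ 4 : ℝ) : ℂ))
    have g2 : ((Real.exp (-(N j * τ j ^ 4)) : ℝ) : ℂ) ≠ 0 := by exact_mod_cast (Real.exp_pos _).ne'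
    have g3 : ((Real.exp (-(CC * (τ j ^ 2)⁻¹)) : ℝ) : ℂ) ≠ 0 := by exact_mod_cast (Real.exp_pos _).ne'
    have g4 : (τ j : ℂ) ≠ 0 := by exact_mod_cast hτj.ne'
    have g5 : (Real.pi : ℂ) ≠ 0 := by exact_mod_cast hp.ne'
    generalize Real.exp (-(N j * τ j ^ 4)) = A at *
    generalize Real.exp (-(CC * (τ j ^ 2)⁻¹)) = B at *
    generalize Complex.exp (GG ((τ j ^ 4 : ℝ) : ℂ)) = G at *
    push_cast
    field_simp
  rw [e2, Complex.ofReal_re]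

end SqPart

open Filter Topology
namespace SqPart
open MeasureTheory

lemma final_const {N τ : ℝ} (hτ : 0 < τ) (hN : N * τ ^ 6 = CC / 2) :
    zetaThreeHalves ^ ((2 : ℝ) / 3) /
            (2 ^ ((7 : ℝ) / 3) * Real.sqrt 3 * Real.pi ^ ((7 : ℝ) / 6) * N ^ ((7 : ℝ) / 6)) *
          Real.exp ((3 / 2 ^ ((4 : ℝ) / 3)) * Real.pi ^ ((1 : ℝ) / 3) *
            zetaThreeHalves ^ ((2 : ℝ) / 3) * N ^ ((1 : ℝ) / 3)) =
    (τ ^ 7 * Real.exp (3 / 2 * CC / τ ^ 2)) *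
      (Real.sqrt (Real.pi / (3 / 8 * CC)) / (4 * Real.pi ^ 2)) := by
  have hp := Real.pi_pos
  have hz := zeta_pos
  set ζ := zetaThreeHalves with hζ
  obtain ⟨a, ha⟩ : ∃ a, ζ = Real.exp a := ⟨Real.log ζ, (Real.exp_log hz).symm⟩
  obtain ⟨p, hpe⟩ : ∃ p, Real.pi = Real.exp p := ⟨Real.log Real.pi, (Real.exp_log hp).symm⟩
  obtain ⟨b, hb⟩ : ∃ b, (2:ℝ) = Real.exp b := ⟨Real.log 2, (Real.exp_log two_pos).symm⟩
  obtain ⟨c, hc⟩ : ∃ c, (3:ℝ) = Real.exp c := ⟨Real.log 3, (Real.exp_log three_pos).symm⟩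
  obtain ⟨w, hw⟩ : ∃ w, τ = Real.exp w := ⟨Real.log τ, (Real.exp_log hτ).symm⟩
  have hsq : ∀ x : ℝ, Real.sqrt (Real.exp x) = Real.exp (x / 2) := by
    intro x; rw [Real.sqrt_eq_rpow, ← Real.exp_mul]; ring_nf
  have d2 : ∀ x : ℝ, Real.exp x / 2 = Real.exp (x - b) := by
    intro x; rw [Real.exp_sub, ← hb]
  have d3 : ∀ x : ℝ, 3 / Real.exp x = Real.exp (c - x) := by
    intro x; rw [Real.exp_sub, ← hc]
  have hCC : CC = Real.exp (p / 2 - b + a) := by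
    unfold CC
    rw [← hζ, ha, hpe, hsq, d2, ← Real.exp_add]
  have hNe : N = Real.exp (p / 2 - 2 * b + a - 6 * w) := by
    have : N = CC / 2 / τ ^ 6 := by rw [← hN]; field_simp
    rw [this, hCC, hw, ← Real.exp_nat_mul]
    rw [d2, ← Real.exp_sub]
    congr 1; push_cast; ring
  have h1 : (3 / 2 ^ ((4 : ℝ) / 3)) * Real.pi ^ ((1 : ℝ) / 3) * ζ ^ ((2 : ℝ) / 3) * N ^ ((1 : ℝ) / 3) =
      3 / 2 * CC / τ ^ 2 := by
    have e1 : (2:ℝ) ^ ((4 : ℝ) / 3) = Real.exp (b * (4 / 3)) := by rw [hb, ← Real.exp_mul]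
    have e2 : (3 / 2 : ℝ) = Real.exp (c - b) := by rw [Real.exp_sub, ← hb, ← hc]
    rw [e1, e2, hNe, hpe, ha, hCC, hw, ← Real.exp_nat_mul, ← Real.exp_mul, ← Real.exp_mul,
      ← Real.exp_mul, d3, ← Real.exp_add, ← Real.exp_add, ← Real.exp_add,
      ← Real.exp_add, ← Real.exp_sub]
    congr 1; push_cast; ring
  rw [h1]
  have h2 : ζ ^ ((2 : ℝ) / 3) / (2 ^ ((7 : ℝ) / 3) * Real.sqrt 3 * Real.pi ^ ((7 : ℝ) / 6) *
      N ^ ((7 : ℝ) / 6)) = τ ^ 7 * (Real.sqrt (Real.pi / (3 / 8 * CC)) / (4 * Real.pi ^ 2)) := by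
    have e1 : (2:ℝ) ^ ((7 : ℝ) / 3) = Real.exp (b * (7 / 3)) := by rw [hb, ← Real.exp_mul]
    have e2 : (3 / 8 : ℝ) = Real.exp (c - 3 * b) := by
      have : (3:ℝ) * b = ((3:ℕ) : ℝ) * b := by push_cast; rfl
      rw [Real.exp_sub, this, Real.exp_nat_mul, ← hb, ← hc]; norm_num
    have e3 : (4 : ℝ) = Real.exp (2 * b) := by
      have : (2:ℝ) * b = ((2:ℕ) : ℝ) * b := by push_cast; rfl
      rw [this, Real.exp_nat_mul, ← hb]; norm_num
    have e4 : Real.sqrt 3 = Real.exp (c / 2) := by rw [hc, hsq]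
    rw [e1, e2, e4, hNe, hpe, ha, hCC, hw, e3, ← Real.exp_nat_mul, ← Real.exp_nat_mul, ← Real.exp_mul,
      ← Real.exp_mul, ← Real.exp_mul, ← Real.exp_add (c - 3 * b), ← Real.exp_sub p, hsq,
      ← Real.exp_add, ← Real.exp_add, ← Real.exp_add, ← Real.exp_add, ← Real.exp_sub, ← Real.exp_sub,
      ← Real.exp_add]
    congr 1; push_cast; ring
  rw [h2]; ring

end SqPart

theorem stmt17 :
    Tendsto (fun n : ℕ => (pSq n : ℝ) /
        (zetaThreeHalves ^ ((2 : ℝ) / 3) /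
            (2 ^ ((7 : ℝ) / 3) * Real.sqrt 3 * Real.pi ^ ((7 : ℝ) / 6) * (n : ℝ) ^ ((7 : ℝ) / 6)) *
          Real.exp ((3 / 2 ^ ((4 : ℝ) / 3)) * Real.pi ^ ((1 : ℝ) / 3) *
            zetaThreeHalves ^ ((2 : ℝ) / 3) * (n : ℝ) ^ ((1 : ℝ) / 3))))
      atTop (𝓝 1) := by
  rw [← tendsto_add_atTop_iff_nat 1]
  have hC := SqPart.CC_pos
  set τ : ℕ → ℝ := fun j => (SqPart.CC / 2 / ((j + 1 : ℕ) : ℝ)) ^ ((1 : ℝ) / 6) with hτdef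
  have hτ : ∀ j, 0 < τ j := by
    intro j; simp only [hτdef]; positivity
  have hN : ∀ j, ((j + 1 : ℕ) : ℝ) * τ j ^ 6 = SqPart.CC / 2 := by
    intro j
    have hj : (0:ℝ) < ((j + 1 : ℕ) : ℝ) := by positivity
    have : τ j ^ 6 = SqPart.CC / 2 / ((j + 1 : ℕ) : ℝ) := by
      simp only [hτdef]
      rw [← Real.rpow_natCast, ← Real.rpow_mul (by positivity)]
      norm_num
    rw [this]; field_simp
  have h0 : Tendsto τ atTop (𝓝 0) := by
    have h1 : Tendsto (fun j : ℕ => SqPart.CC / 2 / ((j + 1 : ℕ) : ℝ)) atTop (𝓝 0) :=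
      (tendsto_natCast_atTop_atTop.comp (tendsto_add_atTop_nat 1)).const_div_atTop _
    have h2 := h1.rpow_const (p := (1 : ℝ) / 6) (Or.inr (by norm_num))
    rw [Real.zero_rpow (by norm_num)] at h2
    exact h2
  have h := SqPart.tendsto_real (N := fun j => j + 1) hτ h0 hN
  have hL : 0 < Real.sqrt (Real.pi / (3 / 8 * SqPart.CC)) / (4 * Real.pi ^ 2) := by
    have := Real.pi_pos
    positivity
  have h3 := h.div_const (Real.sqrt (Real.pi / (3 / 8 * SqPart.CC)) / (4 * Real.pi ^ 2))
  rw [div_self hL.ne'] at h3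
  refine h3.congr (fun j => ?_)
  rw [SqPart.final_const (hτ j) (hN j), div_div]
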